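/- If h : (0,∞)² → ℝ is continuous and piecewise generalized polynomial, then h is a pointwise supremum of infima of finitely many generalized polynomial functions; i.e., there exist finitely many generalized polynomial functions f_{jk} (1 ≤ j ≤ J, 1 ≤ k ≤ K_j) such that h(x,y) = max_{1≤j≤J} min_{1≤k≤K_j} f_{jk}(x,y) for all (x,y) ∈ (0,∞)². -/

import Mathlib

open Set

noncomputable section

/-- The open positive quadrant `(0,∞)²`, as a subtype of `ℝ × ℝ`. -/
abbrev PQ : Type := {p : ℝ × ℝ // 0 < p.1 ∧ 0 < p.2}

/-- A generalized polynomial function (signomial) of two variables: a finite sum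
`∑ cᵢ x^{αᵢ₁} y^{αᵢ₂}` with nonzero real coefficients and distinct real exponent pairs. -/
def IsGenPoly (a : PQ → ℝ) : Prop :=
  ∃ (m : ℕ) (c : Fin m → ℝ) (α : Fin m → ℝ × ℝ),
    (∀ i, c i ≠ 0) ∧ Function.Injective α ∧
    ∀ p : PQ, a p = ∑ i, c i * p.1.1 ^ (α i).1 * p.1.2 ^ (α i).2

/-- A basic generalized semialgebraic (semisignomial) subset of `(0,∞)²`. -/
def IsBasicGSA (S : Set PQ) : Prop :=
  ∃ (f : PQ → ℝ) (K : ℕ) (g : Fin K → PQ → ℝ),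
    IsGenPoly f ∧ (∀ k, IsGenPoly (g k)) ∧
    S = {p : PQ | f p = 0 ∧ ∀ k, 0 < g k p}

/-- A generalized semialgebraic set: a finite union of basic ones. -/
def IsGSA (S : Set PQ) : Prop :=
  ∃ (J : ℕ) (T : Fin J → Set PQ), (∀ j, IsBasicGSA (T j)) ∧ S = ⋃ j, T j

/-- `h` is piecewise generalized polynomial: there are finitely many *distinct*
generalized polynomial functions `g i` whose agreement sets with `h` are
generalized semialgebraic and cover `(0,∞)²`. -/
def IsPiecewiseGenPoly (h : PQ → ℝ) : Prop :=
  ∃ (l : ℕ) (g : Fin l → PQ → ℝ),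
    (∀ i, IsGenPoly (g i)) ∧ Function.Injective g ∧
    (∀ i, IsGSA {p : PQ | h p = g i p}) ∧
    ∀ p : PQ, ∃ i, h p = g i p

/-- `h` is a pointwise sup of infs of finitely many generalized polynomial functions. -/
def IsSupInf (h : PQ → ℝ) : Prop :=
  ∃ (J : ℕ) (K : Fin (J + 1) → ℕ)
    (f : (j : Fin (J + 1)) → Fin (K j + 1) → PQ → ℝ),
    (∀ j k, IsGenPoly (f j k)) ∧
    ∀ p : PQ, h p = ⨆ j, ⨅ k, f j k p

/-!
A continuous function `h` is a supremum of infima of members of a function algebra `𝒜` as soon as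
any two ultrafilters `U`, `V` are separated: some `f ∈ 𝒜` satisfies `f ≤ h` along `U` and `h ≤ f`
along `V`. The pieces of `h` along `U` and `V` differ by an element of `𝒜`, and by Madden's theory
of separating ideals such an `f` exists once that difference lies in the ideal generated by the
`e ∈ 𝒜` with `e ≤ 0` along `U` and `0 ≤ e` along `V`. For this it suffices to connect `U` to `V`
inside the nonvanishing locus of any finitely many members of `𝒜` outside the ideal.

In exponential coordinates generalized polynomials become exponential sums on the plane. If every
nonzero linear functional tends to the same infinity along `U` and `V`, a single exponential
dominates on a convex set. If `U` and `V` converge to the same point and exponential sums are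
constant modulo the ideal, a neighborhood of the point suffices. Otherwise both live on the sets
`{t > A, |s| < δ}` of suitable coordinates `t`, `s`, where `t` or `exp (-t)` is an affine function
of the plane. There Rolle's theorem makes the sections over each `t` connected, Weierstrass
division over the series in `exp (-t)` turns the functions into polynomials in `s`, and Bézout
identities keep the endpoints of the sections from merging.
-/

open Filter Topology

/-! ### Suprema of infima and separating ideals -/

section SupInf

variable {X : Type*}

lemma exists_finset_cover_of_forall_ultrafilter {ι : Type*} (s : ι → Set X)
    (h : ∀ U : Ultrafilter X, ∃ i, s i ∈ U) : ∃ T : Finset ι, ∀ x, ∃ i ∈ T, x ∈ s i := by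
  obtain ⟨T, hT⟩ := isCompact_univ.elim_finite_subcover (fun i => {U : Ultrafilter X | s i ∈ U})
    (fun i => ultrafilter_isOpen_basic (s i)) (fun U _ => mem_iUnion.2 (h U))
  refine ⟨T, fun x => ?_⟩
  obtain ⟨i, hi, hx⟩ := mem_iUnion₂.1 (hT (mem_univ (pure x)))
  exact ⟨i, hi, Ultrafilter.mem_pure.1 hx⟩

lemma exists_fin_cover_of_forall_ultrafilter [Nonempty X] {ι : Type*} (s : ι → Set X)
    (h : ∀ U : Ultrafilter X, ∃ i, s i ∈ U) :
    ∃ (n : ℕ) (i : Fin (n + 1) → ι), ∀ x, ∃ k, x ∈ s (i k) := by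
  obtain ⟨T, hT⟩ := exists_finset_cover_of_forall_ultrafilter s h
  obtain ⟨i, hi, -⟩ := hT (Classical.arbitrary X)
  obtain ⟨n, hn⟩ := Nat.exists_eq_succ_of_ne_zero (Finset.card_ne_zero_of_mem hi)
  refine ⟨n, fun k => (T.equivFinOfCardEq hn).symm k, fun x => ?_⟩
  obtain ⟨i, hi, hx⟩ := hT x
  exact ⟨T.equivFinOfCardEq hn ⟨i, hi⟩, by simpa using hx⟩

theorem exists_eq_iSup_iInf_of_separation [Nonempty X] {S : Set (X → ℝ)} {h : X → ℝ}
    (hsep : ∀ U V : Ultrafilter X, ∃ e ∈ S, (∀ᶠ x in U, e x ≤ h x) ∧ ∀ᶠ x in V, h x ≤ e x) :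
    ∃ (J : ℕ) (K : Fin (J + 1) → ℕ) (f : (j : Fin (J + 1)) → Fin (K j + 1) → X → ℝ),
      (∀ j k, f j k ∈ S) ∧ ∀ x, h x = ⨆ j, ⨅ k, f j k x := by
  have upper : ∀ V : Ultrafilter X, ∃ (K : ℕ) (f : Fin (K + 1) → X → ℝ), (∀ k, f k ∈ S) ∧
      (∀ k, ∀ᶠ x in V, h x ≤ f k x) ∧ ∀ x, ∃ k, f k x ≤ h x := by
    intro V
    obtain ⟨K, e, he⟩ := exists_fin_cover_of_forall_ultrafilter
      (fun e : {e : X → ℝ // e ∈ S ∧ ∀ᶠ x in V, h x ≤ e x} => {x | e.1 x ≤ h x})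
      fun U => let ⟨e, heS, heU, heV⟩ := hsep U V; ⟨⟨e, heS, heV⟩, heU⟩
    exact ⟨K, fun k => (e k).1, fun k => (e k).2.1, fun k => (e k).2.2, he⟩
  choose K f hfS hfV hfh using upper
  obtain ⟨J, V, hV⟩ := exists_fin_cover_of_forall_ultrafilter
    (fun V : Ultrafilter X => {x | ∀ k, h x ≤ f V k x}) fun V => ⟨V, eventually_all.2 (hfV V)⟩
  refine ⟨J, fun j => K (V j), fun j => f (V j), fun j => hfS (V j), fun x => le_antisymm ?_ ?_⟩
  · obtain ⟨j, hj⟩ := hV x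
    exact (le_ciInf hj).trans <|
      le_ciSup (f := fun j => ⨅ k, f (V j) k x) (finite_range _).bddAbove j
  · refine ciSup_le fun j => ?_
    obtain ⟨k, hk⟩ := hfh (V j) x
    exact (ciInf_le (finite_range _).bddBelow k).trans hk

end SupInf

section SeparatingIdeal

variable {X : Type*}

/-- Madden's separating ideal of two filters relative to an algebra `𝒜` of functions: the functions
bounded along `V` by a member of `𝒜` that is nonpositive along `U`. It is defined as a space of
arbitrary functions, not only of members of `𝒜`. -/
def separatingIdeal (𝒜 : Subalgebra ℝ (X → ℝ)) (U V : Filter X) : Submodule ℝ (X → ℝ) where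
  carrier := {f | ∃ e ∈ 𝒜, (∀ᶠ x in U, e x ≤ 0) ∧ ∀ᶠ x in V, |f x| ≤ e x}
  zero_mem' := ⟨0, 𝒜.zero_mem, by simp, by simp⟩
  add_mem' := by
    rintro f g ⟨e, he, heU, heV⟩ ⟨e', he', heU', heV'⟩
    refine ⟨e + e', 𝒜.add_mem he he', ?_, ?_⟩
    · filter_upwards [heU, heU'] with x h h' using add_nonpos h h'
    · filter_upwards [heV, heV'] with x h h' using (abs_add_le _ _).trans (add_le_add h h')
  smul_mem' := by
    rintro c f ⟨e, he, heU, heV⟩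
    refine ⟨|c| • e, 𝒜.smul_mem he _, ?_, ?_⟩
    · filter_upwards [heU] with x h using mul_nonpos_of_nonneg_of_nonpos (abs_nonneg c) h
    · filter_upwards [heV] with x h
      simpa only [Pi.smul_apply, smul_eq_mul, abs_mul] using
        mul_le_mul_of_nonneg_left h (abs_nonneg c)

/-- Two filters are linked when every finite set of functions of `𝒜` outside their separating
ideal is nonvanishing on a connected set belonging to both filters. -/
def AreLinked (𝒜 : Subalgebra ℝ (X → ℝ)) [TopologicalSpace X] (U V : Filter X) : Prop :=
  ∀ s : Set (X → ℝ), s.Finite → (∀ f ∈ s, f ∈ 𝒜 ∧ f ∉ separatingIdeal 𝒜 U V) →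
    ∃ D, IsPreconnected D ∧ D ∈ U ∧ D ∈ V ∧ ∀ x ∈ D, ∀ f ∈ s, f x ≠ 0

variable {𝒜 : Subalgebra ℝ (X → ℝ)}

lemma mem_separatingIdeal_of_one_mem {U V : Filter X} (h : 1 ∈ separatingIdeal 𝒜 U V)
    {f : X → ℝ} (hf : f ∈ 𝒜) : f ∈ separatingIdeal 𝒜 U V := by
  obtain ⟨e, he, heU, heV⟩ := h
  refine ⟨e * (f ^ 2 + 1), 𝒜.mul_mem he (𝒜.add_mem (𝒜.pow_mem hf 2) 𝒜.one_mem), ?_, ?_⟩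
  · filter_upwards [heU] with x hx
    exact mul_nonpos_of_nonpos_of_nonneg hx (add_nonneg (sq_nonneg (f x)) zero_le_one)
  · filter_upwards [heV] with x hx
    have hfx : |f x| ≤ f x ^ 2 + 1 := by nlinarith [sq_nonneg (|f x| - 1), sq_abs (f x)]
    rw [Pi.one_apply, abs_one] at hx
    exact hfx.trans (le_mul_of_one_le_left (by positivity) hx)

/-- If `f` changed sign between `U` and `V`, then `f` or `-f` would bound `|f|` along `V`. -/
lemma exists_mul_pos_of_notMem_separatingIdeal {U V : Ultrafilter X} {f : X → ℝ} (hf : f ∈ 𝒜)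
    (hI : f ∉ separatingIdeal 𝒜 U V) :
    ∃ σ : ℝ, σ ≠ 0 ∧ (∀ᶠ x in U, 0 < σ * f x) ∧ ∀ᶠ x in V, 0 < σ * f x := by
  have key : ∀ {g : X → ℝ}, g ∈ 𝒜 → g ∉ separatingIdeal 𝒜 U V → (∀ᶠ x in U, g x ≤ 0) →
      ∀ᶠ x in V, g x < 0 := by
    intro g hg hgI hU
    by_contra hV
    refine hgI ⟨g, hg, hU, ?_⟩
    filter_upwards [Ultrafilter.eventually_not.2 hV] with x hx
    exact (abs_of_nonneg (not_lt.1 hx)).le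
  have hnI : -f ∉ separatingIdeal 𝒜 U V := fun h => hI (neg_neg f ▸ Submodule.neg_mem _ h)
  by_cases hU : ∀ᶠ x in U, 0 < f x
  · refine ⟨1, one_ne_zero, by simpa only [one_mul] using hU, ?_⟩
    filter_upwards [key (𝒜.neg_mem hf) hnI (hU.mono fun x hx => neg_nonpos.2 hx.le)] with x hx
    simpa using hx
  · have hU' : ∀ᶠ x in U, f x ≤ 0 :=
      (Ultrafilter.eventually_not.2 hU).mono fun x hx => not_lt.1 hx
    have hV := key hf hI hU'
    refine ⟨-1, by norm_num, ?_, hV.mono fun x hx => by linarith⟩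
    by_contra hUz
    have hU0 : ∀ᶠ x in U, -f x ≤ 0 :=
      (Ultrafilter.eventually_not.2 hUz).mono fun x hx => by linarith
    obtain ⟨x, hx, hx'⟩ := ((key (𝒜.neg_mem hf) hnI hU0).and hV).exists
    simp only [Pi.neg_apply] at hx
    linarith

lemma exists_eventually_of_forall_exists {ι : Type*} [Finite ι] (U : Ultrafilter X)
    {p : ι → X → Prop} (h : ∀ x, ∃ i, p i x) : ∃ i, ∀ᶠ x in U, p i x := by
  by_contra! hcon
  obtain ⟨x, hx⟩ := (eventually_all.2 hcon).exists
  obtain ⟨i, hi⟩ := h x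
  exact hx i hi

variable [TopologicalSpace X] {ι : Type*} [Finite ι] {h : X → ℝ} {g : ι → X → ℝ}

/-- Otherwise the pieces `g k` with `g k - g i` in the ideal and the remaining ones would split the
connected set on which the differences outside the ideal do not vanish. -/
lemma sub_mem_separatingIdeal_of_areLinked (h𝒜 : ∀ f ∈ 𝒜, Continuous f) (hh : Continuous h)
    (hg : ∀ i, g i ∈ 𝒜) (hcov : ∀ x, ∃ i, h x = g i x) {U V : Filter X} [U.NeBot] [V.NeBot]
    (hUV : AreLinked 𝒜 U V) {i j : ι} (hi : ∀ᶠ x in U, h x = g i x)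
    (hj : ∀ᶠ x in V, h x = g j x) : g j - g i ∈ separatingIdeal 𝒜 U V := by
  by_contra hji
  let I := separatingIdeal 𝒜 U V
  obtain ⟨D, hD, hDU, hDV, hD0⟩ := hUV
    ((fun p : ι × ι => g p.1 - g p.2) '' {p | g p.1 - g p.2 ∉ I}) ((toFinite _).image _) (by
      rintro _ ⟨p, hp, rfl⟩
      exact ⟨𝒜.sub_mem (hg _) (hg _), hp⟩)
  let agree (s : Set ι) : Set X := ⋃ k ∈ s, {x | h x = g k x}
  have hclosed (s : Set ι) : IsClosed (agree s) :=
    s.toFinite.isClosed_biUnion fun k _ => isClosed_eq hh (h𝒜 _ (hg k))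
  let s : Set ι := {k | g k - g i ∈ I}
  obtain ⟨x, hxD, hx, hx'⟩ := isPreconnected_closed_iff.1 hD (agree s) (agree sᶜ)
    (hclosed _) (hclosed _)
    (fun x _ => by
      obtain ⟨k, hk⟩ := hcov x
      by_cases hks : k ∈ s
      · exact Or.inl (mem_biUnion hks hk)
      · exact Or.inr (mem_biUnion hks hk))
    (by
      obtain ⟨x, hx, hxi⟩ := (Filter.Eventually.and hDU hi).exists
      exact ⟨x, hx, mem_biUnion (show g i - g i ∈ I by simp) hxi⟩)
    (by
      obtain ⟨x, hx, hxj⟩ := (Filter.Eventually.and hDV hj).exists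
      exact ⟨x, hx, mem_biUnion hji hxj⟩)
  obtain ⟨k, hk, hxk⟩ := mem_iUnion₂.1 hx
  obtain ⟨l, hl, hxl⟩ := mem_iUnion₂.1 hx'
  have hlk : g l - g k ∉ I := fun hlk =>
    hl (sub_add_sub_cancel (g l) (g k) (g i) ▸ add_mem hlk hk : g l - g i ∈ I)
  exact hD0 x hxD _ ⟨(l, k), hlk, rfl⟩ (sub_eq_zero.2 (hxl.symm.trans hxk))

theorem exists_eq_iSup_iInf_of_forall_areLinked [Nonempty X] (h𝒜 : ∀ f ∈ 𝒜, Continuous f)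
    (hlink : ∀ U V : Ultrafilter X, AreLinked 𝒜 (U : Filter X) V)
    (hh : Continuous h) (hg : ∀ i, g i ∈ 𝒜) (hcov : ∀ x, ∃ i, h x = g i x) :
    ∃ (J : ℕ) (K : Fin (J + 1) → ℕ) (f : (j : Fin (J + 1)) → Fin (K j + 1) → X → ℝ),
      (∀ j k, f j k ∈ 𝒜) ∧ ∀ x, h x = ⨆ j, ⨅ k, f j k x := by
  refine exists_eq_iSup_iInf_of_separation (S := (𝒜 : Set (X → ℝ))) fun U V => ?_
  obtain ⟨i, hi⟩ := exists_eventually_of_forall_exists U hcov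
  obtain ⟨j, hj⟩ := exists_eventually_of_forall_exists V hcov
  obtain ⟨e, he, heU, heV⟩ :=
    sub_mem_separatingIdeal_of_areLinked h𝒜 hh hg hcov (hlink U V) hi hj
  refine ⟨g i + e, 𝒜.add_mem (hg i) he, ?_, ?_⟩
  · filter_upwards [hi, heU] with x hx hex
    rw [hx, Pi.add_apply]
    linarith
  · filter_upwards [hj, heV] with x hx hex
    rw [hx, Pi.add_apply]
    linarith [le_abs_self ((g j - g i) x), Pi.sub_apply (g j) (g i) x]

end SeparatingIdeal

/-! ### Connectedness from Rolle systems -/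

section RolleSystem

variable {κ : Type*} {rank : κ → ℕ} {w : κ → ℝ → ℝ}

/-- A family of functions graded by `rank` to which Rolle's theorem applies inductively: up to a
multiple of itself, the derivative of each member has constant sign wherever all the members of
smaller rank are positive. -/
def IsRolleSystem (rank : κ → ℕ) (w : κ → ℝ → ℝ) : Prop :=
  ∀ k, ∃ (α : ℝ) (v : ℝ → ℝ), (∀ s, HasDerivAt (w k) (α * w k s + v s) s) ∧
    ((∀ s, (∀ k', rank k' < rank k → 0 < w k' s) → 0 ≤ v s) ∨
      ∀ s, (∀ k', rank k' < rank k → 0 < w k' s) → v s ≤ 0)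

namespace IsRolleSystem

/-- The integrating factor `exp (-α * s)` removes the multiple of `w k` from the derivative. -/
lemma exists_monotoneOn_or_antitoneOn (h : IsRolleSystem rank w) {k : κ} {x y : ℝ}
    (hpos : ∀ s ∈ Ioo x y, ∀ k', rank k' < rank k → 0 < w k' s) :
    ∃ α : ℝ, MonotoneOn (fun s => Real.exp (-α * s) * w k s) (Icc x y) ∨
      AntitoneOn (fun s => Real.exp (-α * s) * w k s) (Icc x y) := by
  obtain ⟨α, v, hderiv, hv⟩ := h k
  have hE (s : ℝ) : HasDerivAt (fun s => Real.exp (-α * s) * w k s) (Real.exp (-α * s) * v s) s :=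
    ((hasDerivAt_const_mul (-α)).exp.mul (hderiv s)).congr_deriv (by ring)
  have hcont : ContinuousOn (fun s => Real.exp (-α * s) * w k s) (Icc x y) :=
    fun s _ => (hE s).continuousAt.continuousWithinAt
  have hdiff : DifferentiableOn ℝ (fun s => Real.exp (-α * s) * w k s) (interior (Icc x y)) :=
    fun s _ => (hE s).differentiableAt.differentiableWithinAt
  refine ⟨α, hv.imp (fun hv => ?_) fun hv => ?_⟩
  · refine monotoneOn_of_deriv_nonneg (convex_Icc x y) hcont hdiff fun s hs => ?_
    rw [interior_Icc] at hs
    rw [(hE s).deriv]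
    exact mul_nonneg (Real.exp_pos _).le (hv s (hpos s hs))
  · refine antitoneOn_of_deriv_nonpos (convex_Icc x y) hcont hdiff fun s hs => ?_
    rw [interior_Icc] at hs
    rw [(hE s).deriv]
    exact mul_nonpos_of_nonneg_of_nonpos (Real.exp_pos _).le (hv s (hpos s hs))

lemma ordConnected_setOf_pos (h : IsRolleSystem rank w) : OrdConnected {s | ∀ k, 0 < w k s} := by
  refine ⟨fun x hx y hy s hs k => ?_⟩
  induction hr : rank k using Nat.strong_induction_on generalizing k s with
  | _ r ih =>
    subst hr
    obtain ⟨α, hmono | hanti⟩ := h.exists_monotoneOn_or_antitoneOn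
      fun s hs k' hk' => ih (rank k') hk' s (Ioo_subset_Icc_self hs) k' rfl
    · exact pos_of_mul_pos_right ((mul_pos (Real.exp_pos _) (hx k)).trans_le
        (hmono (left_mem_Icc.2 (hs.1.trans hs.2)) hs hs.1)) (Real.exp_pos _).le
    · exact pos_of_mul_pos_right ((mul_pos (Real.exp_pos _) (hy k)).trans_le
        (hanti hs (right_mem_Icc.2 (hs.1.trans hs.2)) hs.2)) (Real.exp_pos _).le

lemma not_eq_zero_and_eq_zero (h : IsRolleSystem rank w) {a b : ℝ} (hab : a < b)
    (hpos : ∀ s ∈ Ioo a b, ∀ k, 0 < w k s) (k : κ) : ¬(w k a = 0 ∧ w k b = 0) := by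
  rintro ⟨ha, hb⟩
  obtain ⟨s, hs⟩ := nonempty_Ioo.2 hab
  obtain ⟨α, hmono | hanti⟩ :=
    h.exists_monotoneOn_or_antitoneOn (k := k) fun s hs k' _ => hpos s hs k'
  · have := hmono (Ioo_subset_Icc_self hs) (right_mem_Icc.2 hab.le) hs.2.le
    simp only [hb, mul_zero] at this
    exact this.not_gt (mul_pos (Real.exp_pos _) (hpos s hs k))
  · have := hanti (left_mem_Icc.2 hab.le) (Ioo_subset_Icc_self hs) hs.1.le
    simp only [ha, mul_zero] at this
    exact this.not_gt (mul_pos (Real.exp_pos _) (hpos s hs k))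

end IsRolleSystem

end RolleSystem

section Bezout

open Polynomial

lemma exists_map_algebraMap_eq_C_mul {R : Type*} [CommRing R] [IsDomain R]
    (p : (FractionRing R)[X]) : ∃ (b : R) (p' : R[X]), b ≠ 0 ∧
      p'.map (algebraMap R (FractionRing R)) = C (algebraMap R (FractionRing R) b) * p := by
  obtain ⟨b, hb, h⟩ := IsLocalization.integerNormalization_spec (nonZeroDivisors R) p
  exact ⟨b, _, nonZeroDivisors.ne_zero hb, by rw [h, ← smul_eq_C_mul, algebraMap_smul]⟩

/-- Bézout's identity over the fraction field, with denominators cleared. -/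
lemma exists_C_mul_eq_mul_bezout {R : Type*} [CommRing R] [IsDomain R] {P : R[X]} (hP : P ≠ 0)
    (Q : R[X]) : ∃ (G P₁ Q₁ X Y : R[X]) (c r : R), c ≠ 0 ∧ r ≠ 0 ∧ C c * P = G * P₁ ∧
      C c * Q = G * Q₁ ∧ X * P₁ + Y * Q₁ = C r := by
  classical
  have inj : Function.Injective (Polynomial.map (algebraMap R (FractionRing R))) :=
    map_injective _ (IsFractionRing.injective R _)
  let p := P.map (algebraMap R (FractionRing R))
  let q := Q.map (algebraMap R (FractionRing R))
  have hg : gcd p q ≠ 0 := fun h => hP (inj (by simpa [p] using ((gcd_eq_zero_iff _ _).1 h).1))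
  obtain ⟨p₁, hp₁⟩ := gcd_dvd_left p q
  obtain ⟨q₁, hq₁⟩ := gcd_dvd_right p q
  obtain ⟨x, y, hxy⟩ := exists_gcd_eq_mul_add_mul p q
  have hbez : x * p₁ + y * q₁ = 1 := mul_left_cancel₀ hg <| by
    linear_combination -hxy - x * hp₁ - y * hq₁
  obtain ⟨b₀, G, hb₀, hG⟩ := exists_map_algebraMap_eq_C_mul (gcd p q)
  obtain ⟨b₁, P₁, hb₁, hP₁⟩ := exists_map_algebraMap_eq_C_mul p₁
  obtain ⟨b₂, Q₁, hb₂, hQ₁⟩ := exists_map_algebraMap_eq_C_mul q₁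
  obtain ⟨b₃, X, hb₃, hX⟩ := exists_map_algebraMap_eq_C_mul x
  obtain ⟨b₄, Y, hb₄, hY⟩ := exists_map_algebraMap_eq_C_mul y
  refine ⟨G, C b₂ * P₁, C b₁ * Q₁, C b₄ * X, C b₃ * Y, b₀ * b₁ * b₂, b₁ * b₂ * b₃ * b₄,
    by simp [*], by simp [*], inj ?_, inj ?_, inj ?_⟩ <;>
    simp only [Polynomial.map_mul, Polynomial.map_add, map_C, map_mul, hG, hP₁, hQ₁, hX, hY]
  · linear_combination C (algebraMap R _ b₀) * C (algebraMap R _ b₁) * C (algebraMap R _ b₂) * hp₁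
  · linear_combination C (algebraMap R _ b₀) * C (algebraMap R _ b₁) * C (algebraMap R _ b₂) * hq₁
  · linear_combination C (algebraMap R _ b₁) * C (algebraMap R _ b₂) * C (algebraMap R _ b₃) *
      C (algebraMap R _ b₄) * hbez

end Bezout

section Endpoints

lemma csInf_notMem_of_isOpen {C : Set ℝ} (hC : IsOpen C) (hb : BddBelow C) : sInf C ∉ C := by
  intro h
  obtain ⟨l, hl, hsub⟩ := exists_Ioc_subset_of_mem_nhds (hC.mem_nhds h) (exists_lt _)
  obtain ⟨x, hx⟩ := exists_between hl
  exact hx.2.not_ge (csInf_le hb (hsub ⟨hx.1, hx.2.le⟩))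

lemma csSup_notMem_of_isOpen {C : Set ℝ} (hC : IsOpen C) (hb : BddAbove C) : sSup C ∉ C := by
  intro h
  obtain ⟨u, hu, hsub⟩ := exists_Ico_subset_of_mem_nhds (hC.mem_nhds h) (exists_gt _)
  obtain ⟨x, hx⟩ := exists_between hu
  exact hx.1.not_ge (le_csSup hb (hsub ⟨hx.1.le, hx.2⟩))

lemma exists_eq_zero_of_mem_closure_of_notMem {Y κ : Type*} [TopologicalSpace Y] {w : κ → Y → ℝ}
    (hw : ∀ k, Continuous (w k)) {y : Y} (hy : y ∈ closure {y | ∀ k, 0 < w k y})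
    (hy' : y ∉ {y | ∀ k, 0 < w k y}) : ∃ k, w k y = 0 := by
  obtain ⟨k, hk⟩ := not_forall.1 hy'
  exact ⟨k, le_antisymm (not_lt.1 hk) <|
    closure_minimal (fun y hy => (hy k).le) (isClosed_le continuous_const (hw k)) hy⟩

lemma exists_endpoints {κ : Type*} [Finite κ] {w : κ → ℝ → ℝ} (hw : ∀ k, Continuous (w k))
    {B : Set ℝ} (hB : IsCompact B) (hsub : {s | ∀ k, 0 < w k s} ⊆ B)
    (hord : OrdConnected {s | ∀ k, 0 < w k s}) (hne : {s | ∀ k, 0 < w k s}.Nonempty) :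
    ∃ a ∈ B, ∃ b ∈ B, a < b ∧ Ioo a b ⊆ {s | ∀ k, 0 < w k s} ∧
      (∃ k, w k a = 0) ∧ ∃ k, w k b = 0 := by
  set C := {s | ∀ k, 0 < w k s} with hC
  have hopen : IsOpen C := by
    rw [hC, ofPred_forall]
    exact isOpen_iInter_of_finite fun k => isOpen_lt continuous_const (hw k)
  have hbelow : BddBelow C := hB.bddBelow.mono hsub
  have habove : BddAbove C := hB.bddAbove.mono hsub
  have hclosure : closure C ⊆ B := closure_minimal hsub hB.isClosed
  have ha := csInf_mem_closure hne hbelow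
  have hb := csSup_mem_closure hne habove
  have ha' := csInf_notMem_of_isOpen hopen hbelow
  have hb' := csSup_notMem_of_isOpen hopen habove
  refine ⟨sInf C, hclosure ha, sSup C, hclosure hb, ?_,
    IsConnected.Ioo_csInf_csSup_subset ⟨hne, hord.isPreconnected⟩ hbelow habove,
    exists_eq_zero_of_mem_closure_of_notMem hw ha ha',
    exists_eq_zero_of_mem_closure_of_notMem hw hb hb'⟩
  obtain ⟨s, hs⟩ := hne
  exact ((csInf_le hbelow hs).lt_of_ne fun h => ha' (h ▸ hs)).trans_le (le_csSup habove hs)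

end Endpoints

lemma isPreconnected_of_isOpen_of_fiber {X Y : Type*} [TopologicalSpace X] [TopologicalSpace Y]
    {D : Set (X × Y)} (hD : IsOpen D) (hbase : IsPreconnected (Prod.fst '' D))
    (hfiber : ∀ x, IsPreconnected {y | (x, y) ∈ D}) : IsPreconnected D := by
  rintro u v hu hv hcov ⟨zu, hzu, hzu'⟩ ⟨zv, hzv, hzv'⟩
  obtain ⟨_, -, ⟨⟨_, y₁⟩, ⟨h₁, h₁u⟩, rfl⟩, ⟨⟨x, y₂⟩, ⟨h₂, h₂v⟩, rfl⟩⟩ :=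
    hbase _ _ (isOpenMap_fst _ (hD.inter hu)) (isOpenMap_fst _ (hD.inter hv))
      (by
        rintro _ ⟨z, hz, rfl⟩
        exact (hcov hz).imp (fun h => ⟨z, ⟨hz, h⟩, rfl⟩) fun h => ⟨z, ⟨hz, h⟩, rfl⟩)
      ⟨zu.1, mem_image_of_mem _ hzu, zu, ⟨hzu, hzu'⟩, rfl⟩
      ⟨zv.1, mem_image_of_mem _ hzv, zv, ⟨hzv, hzv'⟩, rfl⟩
  have hcont : Continuous fun y : Y => (x, y) := by fun_prop
  obtain ⟨y, hy, hyu, hyv⟩ := hfiber x _ _ (hu.preimage hcont) (hv.preimage hcont)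
    (fun y hy => hcov hy) ⟨y₁, h₁, h₁u⟩ ⟨y₂, h₂, h₂v⟩
  exact ⟨(x, y), hy, hyu, hyv⟩

section NoGap

open Polynomial

variable {T R : Type*} [CommRing R] {φ : T → R →+* ℝ}

/-- The value at `(t, s)` of a polynomial whose coefficients are read as functions of `t` through
the evaluations `φ t`. -/
def evalAt (φ : T → R →+* ℝ) (z : T × ℝ) : R[X] →+* ℝ :=
  eval₂RingHom (φ z.1) z.2

@[simp]
lemma evalAt_C (z : T × ℝ) (r : R) : evalAt φ z (C r) = φ z.1 r :=
  eval₂_C _ _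

@[simp]
lemma evalAt_X (z : T × ℝ) : evalAt φ z X = z.2 :=
  eval₂_X _ _

lemma evalAt_eq_eval_map (z : T × ℝ) (P : R[X]) : evalAt φ z P = (P.map (φ z.1)).eval z.2 :=
  (eval_map _ _).symm

/-- The section at `t` of the region where all the polynomials of a family are positive. -/
def positiveFiber {κ : Type*} (φ : T → R →+* ℝ) (W : κ → R[X]) (t : T) : Set ℝ :=
  {s | ∀ k, 0 < evalAt φ (t, s) (W k)}

variable {κ : Type*} {W : κ → R[X]} [TopologicalSpace T]

lemma continuous_evalAt (hφ : ∀ r, Continuous fun t => φ t r) (P : R[X]) :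
    Continuous fun z => evalAt φ z P := by
  simp only [evalAt, coe_eval₂RingHom, eval₂_eq_sum]
  exact continuous_finsetSum _ fun n _ => ((hφ _).comp continuous_fst).mul (continuous_snd.pow n)

/-- Dividing by the greatest common divisor keeps the roots `a` of `P` and `b` of `Q`, so in the
limit `P₁` and `Q₁` acquire a common root. -/
lemma apply_eq_zero_of_roots_merge (hφ : ∀ r, Continuous fun t => φ t r) {F : Filter T} [F.NeBot]
    {t : T} (hF : F ≤ 𝓝 t) {a b : T → ℝ} {s : ℝ} (ha : Tendsto a F (𝓝 s)) (hb : Tendsto b F (𝓝 s))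
    {P Q G P₁ Q₁ X Y : R[X]} {c r : R} (hP : C c * P = G * P₁) (hQ : C c * Q = G * Q₁)
    (hbez : X * P₁ + Y * Q₁ = C r) (hc : φ t c ≠ 0)
    (hroot : ∀ᶠ x in F, evalAt φ (x, a x) P = 0 ∧ evalAt φ (x, b x) Q = 0)
    (hnroot : ∀ᶠ x in F, evalAt φ (x, b x) P ≠ 0 ∧ evalAt φ (x, a x) Q ≠ 0) : φ t r = 0 := by
  have hc' : ∀ᶠ x in F, φ x c ≠ 0 := ((hφ c).continuousAt.mono_left hF).eventually_ne hc
  have eval (z : T × ℝ) : φ z.1 c * evalAt φ z P = evalAt φ z G * evalAt φ z P₁ ∧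
      φ z.1 c * evalAt φ z Q = evalAt φ z G * evalAt φ z Q₁ := by
    simp only [← evalAt_C, ← map_mul, hP, hQ, and_self]
  have hP₁ : ∀ᶠ x in F, evalAt φ (x, a x) P₁ = 0 := by
    filter_upwards [hc', hroot, hnroot] with x hcx h hn
    obtain ⟨eP, eQ⟩ := eval (x, a x)
    rw [h.1, mul_zero] at eP
    exact (mul_eq_zero.1 eP.symm).resolve_left fun hG =>
      mul_ne_zero hcx hn.2 (by rw [eQ, hG, zero_mul])
  have hQ₁ : ∀ᶠ x in F, evalAt φ (x, b x) Q₁ = 0 := by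
    filter_upwards [hc', hroot, hnroot] with x hcx h hn
    obtain ⟨eP, eQ⟩ := eval (x, b x)
    rw [h.2, mul_zero] at eQ
    exact (mul_eq_zero.1 eQ.symm).resolve_left fun hG =>
      mul_ne_zero hcx hn.1 (by rw [eP, hG, zero_mul])
  have lim (P : R[X]) {d : T → ℝ} (hd : Tendsto d F (𝓝 s))
      (h : ∀ᶠ x in F, evalAt φ (x, d x) P = 0) :
      evalAt φ (t, s) P = 0 :=
    tendsto_nhds_unique (((continuous_evalAt hφ P).tendsto (t, s)).comp
      ((tendsto_id'.2 hF).prodMk_nhds hd)) (tendsto_const_nhds.congr' (h.mono fun x hx => hx.symm))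
  calc φ t r = evalAt φ (t, s) (X * P₁ + Y * Q₁) := by rw [hbez, evalAt_C]
    _ = 0 := by rw [map_add, map_mul, map_mul, lim P₁ ha hP₁, lim Q₁ hb hQ₁]; ring

variable [Finite κ]

lemma isOpen_setOf_forall_evalAt_pos (hφ : ∀ r, Continuous fun t => φ t r) :
    IsOpen {z : T × ℝ | ∀ k, 0 < evalAt φ z (W k)} := by
  rw [ofPred_forall]
  exact isOpen_iInter_of_finite fun k => isOpen_lt continuous_const (continuous_evalAt hφ _)

lemma positiveFiber_nonempty_of_tendsto (hφ : ∀ r, Continuous fun t => φ t r) {F : Filter T}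
    [F.NeBot] {t : T} (hF : F ≤ 𝓝 t) (hW : ∀ k, (W k).map (φ t) ≠ 0) {a b : T → ℝ} {l r : ℝ}
    (ha : Tendsto a F (𝓝 l)) (hb : Tendsto b F (𝓝 r)) (hlr : l < r)
    (hsub : ∀ᶠ x in F, Ioo (a x) (b x) ⊆ positiveFiber φ W x) : (positiveFiber φ W t).Nonempty := by
  have hroots : (⋃ k, {s | ((W k).map (φ t)).IsRoot s}).Finite :=
    finite_iUnion fun k => finite_setOfPred_isRoot (hW k)
  obtain ⟨s, hs, hsroot⟩ := ((Ioo_infinite hlr).sdiff hroots).nonempty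
  refine ⟨s, fun k => lt_of_le_of_ne ?_ fun h => hsroot (mem_iUnion.2 ⟨k, ?_⟩)⟩
  · refine ge_of_tendsto (((continuous_evalAt hφ (W k)).tendsto (t, s)).comp
      ((tendsto_id'.2 hF).prodMk_nhds tendsto_const_nhds)) ?_
    filter_upwards [hsub, ha.eventually_lt_const hs.1, hb.eventually_const_lt hs.2]
      with x hx hax hbx
    exact (hx ⟨hax, hbx⟩ k).le
  · rw [mem_ofPred_eq, IsRoot.def, ← evalAt_eq_eval_map (t, s), ← h]

/-- The endpoints of the sections cannot merge in the limit, because they are roots of two members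
of the family whose coprime parts have no common root. -/
lemma positiveFiber_nonempty_of_mem_closure (hφ : ∀ r, Continuous fun t => φ t r) {B : Set ℝ}
    (hB : IsCompact B) (hsub : ∀ t, positiveFiber φ W t ⊆ B)
    (hord : ∀ t, OrdConnected (positiveFiber φ W t))
    (hend : ∀ t k, ∀ a b : ℝ, a < b → Ioo a b ⊆ positiveFiber φ W t →
      ¬(evalAt φ (t, a) (W k) = 0 ∧ evalAt φ (t, b) (W k) = 0))
    {t : T} (hW : ∀ k, (W k).map (φ t) ≠ 0)
    (hgcd : ∀ k k', ∃ (G P₁ Q₁ X Y : R[X]) (c r : R), C c * W k = G * P₁ ∧ C c * W k' = G * Q₁ ∧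
      X * P₁ + Y * Q₁ = C r ∧ φ t c ≠ 0 ∧ φ t r ≠ 0)
    (ht : t ∈ closure {t | (positiveFiber φ W t).Nonempty}) : (positiveFiber φ W t).Nonempty := by
  let S := {t | (positiveFiber φ W t).Nonempty}
  have : (𝓝[S] t).NeBot := mem_closure_iff_nhdsWithin_neBot.1 ht
  let F := Ultrafilter.of (𝓝[S] t)
  have hF : (F : Filter T) ≤ 𝓝 t := (Ultrafilter.of_le _).trans nhdsWithin_le_nhds
  have hFS : ∀ᶠ x in F, x ∈ S := Ultrafilter.of_le _ self_mem_nhdsWithin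
  have hendpoints (x : T) (hx : x ∈ S) := exists_endpoints
    (fun k => (continuous_evalAt hφ (W k)).comp (Continuous.prodMk_right x)) hB (hsub x) (hord x) hx
  choose! a haB b hbB hab hIoo ha hb using hendpoints
  obtain ⟨l, -, hl⟩ := hB.ultrafilter_le_nhds' (F.map a) (hFS.mono haB)
  obtain ⟨r, -, hr⟩ := hB.ultrafilter_le_nhds' (F.map b) (hFS.mono hbB)
  have hlr : l ≤ r := le_of_tendsto_of_tendsto hl hr (hFS.mono fun x hx => (hab x hx).le)
  rcases hlr.lt_or_eq with hlr | rfl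
  · exact positiveFiber_nonempty_of_tendsto hφ hF hW hl hr hlr (hFS.mono hIoo)
  · obtain ⟨k, hk⟩ := Ultrafilter.eventually_exists_iff.1 (hFS.mono ha)
    obtain ⟨k', hk'⟩ := Ultrafilter.eventually_exists_iff.1 (hFS.mono hb)
    obtain ⟨G, P₁, Q₁, X, Y, c, r, hP, hQ, hbez, hc, hr0⟩ := hgcd k k'
    refine absurd (apply_eq_zero_of_roots_merge hφ hF hl hr hP hQ hbez hc (hk.and hk') ?_) hr0
    filter_upwards [hFS, hk, hk'] with x hx hkx hkx'
    exact ⟨fun h => hend x k _ _ (hab x hx) (hIoo x hx) ⟨hkx, h⟩,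
      fun h => hend x k' _ _ (hab x hx) (hIoo x hx) ⟨h, hkx'⟩⟩

end NoGap

theorem exists_isPreconnected_setOf_forall_evalAt_pos {T R κ : Type*} [CommRing R] [IsDomain R]
    [ConditionallyCompleteLinearOrder T] [TopologicalSpace T] [OrderTopology T] [DenselyOrdered T]
    [Nonempty T] [Finite κ] {φ : T → R →+* ℝ} {W : κ → Polynomial R}
    (hφ : ∀ r, Continuous fun t => φ t r) (hφ0 : ∀ r ≠ 0, ∀ᶠ t in atTop, φ t r ≠ 0) {B : Set ℝ}
    (hB : IsCompact B) (hW : ∀ t k, (W k).map (φ t) ≠ 0) (hsub : ∀ t, positiveFiber φ W t ⊆ B)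
    (hord : ∀ t, OrdConnected (positiveFiber φ W t))
    (hend : ∀ t k, ∀ a b : ℝ, a < b → Ioo a b ⊆ positiveFiber φ W t →
      ¬(evalAt φ (t, a) (W k) = 0 ∧ evalAt φ (t, b) (W k) = 0)) :
    ∃ t₀, IsPreconnected {z : T × ℝ | t₀ < z.1 ∧ ∀ k, 0 < evalAt φ z (W k)} := by
  have hW0 (k : κ) : W k ≠ 0 := fun h =>
    hW (Classical.arbitrary T) k (by rw [h, Polynomial.map_zero])
  have hgcd (k k' : κ) := exists_C_mul_eq_mul_bezout (hW0 k) (W k')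
  choose G P₁ Q₁ X Y c r hc hr hP hQ hbez using hgcd
  have hcr : ∀ᶠ t in atTop, ∀ k k', φ t (c k k') ≠ 0 ∧ φ t (r k k') ≠ 0 :=
    eventually_all.2 fun k => eventually_all.2 fun k' => (hφ0 _ (hc k k')).and (hφ0 _ (hr k k'))
  obtain ⟨t₀, ht₀⟩ := eventually_atTop.1 hcr
  have hopen : IsOpen {z : T × ℝ | ∀ k, 0 < evalAt φ z (W k)} := isOpen_setOf_forall_evalAt_pos hφ
  refine ⟨t₀, ?_⟩
  set D := {z : T × ℝ | t₀ < z.1 ∧ ∀ k, 0 < evalAt φ z (W k)}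
  let S := {t | (positiveFiber φ W t).Nonempty}
  have hS : S = Prod.fst '' {z : T × ℝ | ∀ k, 0 < evalAt φ z (W k)} := by
    ext t
    simp [S, positiveFiber, Set.Nonempty]
  have hSclosed : closure S ∩ Ioi t₀ ⊆ S := fun t ⟨ht, ht'⟩ =>
    positiveFiber_nonempty_of_mem_closure hφ hB hsub hord hend (hW t) (fun k k' =>
      ⟨_, _, _, _, _, _, _, hP k k', hQ k k', hbez k k', ht₀ t (le_of_lt ht') k k'⟩) ht
  have hbase : Prod.fst '' D = Ioi t₀ ∩ S := by
    ext t
    simp [D, S, positiveFiber, Set.Nonempty]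
  refine isPreconnected_of_isOpen_of_fiber ((isOpen_lt continuous_const continuous_fst).inter hopen)
    ?_ fun t => ?_
  · rw [hbase]
    rcases (Ioi t₀ ∩ S).eq_empty_or_nonempty with h | h
    · exact h ▸ isPreconnected_empty
    · rw [inter_eq_left.2 (isPreconnected_Ioi.subset_of_closure_inter_subset
        (hS ▸ isOpenMap_fst _ hopen) h hSclosed)]
      exact isPreconnected_Ioi
  · by_cases ht : t₀ < t
    · simpa [D, ht, positiveFiber] using (hord t).isPreconnected
    · simpa [D, ht] using isPreconnected_empty

/-! ### Series in exponentials -/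

section ExpSeries

open scoped NNReal

/-- The functions on `[0, ∞)` that are sums of convergent series `∑ c_γ exp (-γ t)` with exponents
in `Γ`. -/
def expSeries (Γ : Set ℝ) : Submodule ℝ (ℝ≥0 → ℝ) where
  carrier := {f | ∃ c : Γ → ℝ, ∀ t : ℝ≥0, HasSum (fun γ : Γ => c γ * Real.exp (-γ * t)) (f t)}
  zero_mem' := ⟨0, fun t => by simp⟩
  add_mem' := by
    rintro f g ⟨c, hc⟩ ⟨d, hd⟩
    exact ⟨c + d, fun t => by simpa only [Pi.add_apply, add_mul] using (hc t).add (hd t)⟩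
  smul_mem' := by
    rintro a f ⟨c, hc⟩
    exact ⟨a • c, fun t => by
      simpa only [Pi.smul_apply, smul_eq_mul, mul_assoc] using (hc t).mul_left a⟩

variable {Γ : Set ℝ} {f : ℝ≥0 → ℝ}

lemma mem_expSeries_of_hasSum {ι : Type*} {c γ : ι → ℝ} (hγ : ∀ i, γ i ∈ Γ)
    (h : ∀ t : ℝ≥0, HasSum (fun i => c i * Real.exp (-γ i * t)) (f t)) : f ∈ expSeries Γ := by
  let γ' : ι → Γ := fun i => ⟨γ i, hγ i⟩
  refine ⟨fun x => ∑' i : γ' ⁻¹' {x}, c i, fun t => ?_⟩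
  refine ((h t).tsum_fiberwise γ').congr_fun fun x => ?_
  rw [← tsum_mul_right]
  refine tsum_congr fun i => ?_
  rw [← show γ i.1 = x from congrArg Subtype.val i.2]

lemma exp_neg_mul_mem_expSeries {γ : ℝ} (hγ : γ ∈ Γ) :
    (fun t : ℝ≥0 => Real.exp (-γ * t)) ∈ expSeries Γ :=
  mem_expSeries_of_hasSum (ι := Unit) (c := 1) (fun _ => hγ) fun t => by simp

lemma continuous_of_mem_expSeries (hΓ : ∀ γ ∈ Γ, 0 ≤ γ) (hf : f ∈ expSeries Γ) : Continuous f := by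
  obtain ⟨c, hc⟩ := hf
  have hcsum : Summable c := by simpa using (hc 0).summable
  rw [show f = fun t : ℝ≥0 => ∑' γ, c γ * Real.exp (-γ * t) from
    funext fun t => (hc t).tsum_eq.symm]
  refine continuous_tsum (fun γ => by fun_prop) hcsum.abs fun γ t => ?_
  rw [Real.norm_eq_abs, abs_mul, Real.abs_exp]
  refine mul_le_of_le_one_right (abs_nonneg _) (Real.exp_le_one_iff.2 ?_)
  exact mul_nonpos_of_nonpos_of_nonneg (neg_nonpos.2 (hΓ γ γ.2)) t.2

/-- The smallest exponent dominates. -/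
lemma tendsto_tsum_mul_exp_sub {c : Γ → ℝ} (hc : Summable c) {g : Γ} (hg : ∀ γ < g, c γ = 0) :
    Tendsto (fun t : ℝ≥0 => ∑' γ : Γ, c γ * Real.exp ((g - γ) * t)) atTop (𝓝 (c g)) := by
  rw [← tsum_ite_eq g (fun γ : Γ => c γ)]
  refine tendsto_tsum_of_dominated_convergence hc.abs (fun γ => ?_) (Eventually.of_forall ?_)
  · rcases lt_trichotomy γ g with h | rfl | h
    · simp [h.ne, hg γ h]
    · simp
    · have hdiff : (g - γ : ℝ) < 0 := sub_neg.2 h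
      have : Tendsto (fun t : ℝ≥0 => Real.exp ((g - γ) * t)) atTop (𝓝 0) :=
        Real.tendsto_exp_atBot.comp
          ((NNReal.tendsto_coe_atTop.2 tendsto_id).const_mul_atTop_of_neg hdiff)
      simpa [h.ne'] using this.const_mul (c γ)
  · intro t γ
    rcases lt_or_ge γ g with h | h
    · simp [hg γ h]
    · rw [Real.norm_eq_abs, abs_mul, Real.abs_exp]
      refine mul_le_of_le_one_right (abs_nonneg _) (Real.exp_le_one_iff.2 ?_)
      exact mul_nonpos_of_nonpos_of_nonneg (sub_nonpos.2 h) t.2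

lemma eventually_ne_zero_of_mem_expSeries (hΓ : Γ.IsWF) (hf : f ∈ expSeries Γ) (hf0 : f ≠ 0) :
    ∀ᶠ t in atTop, f t ≠ 0 := by
  obtain ⟨c, hc⟩ := hf
  have hcsum : Summable c := by simpa using (hc 0).summable
  have hne : ∃ γ, c γ ≠ 0 := by
    by_contra! h
    exact hf0 (funext fun t => (hc t).unique (by simp [h]))
  have hwf : WellFounded ((· < ·) : Γ → Γ → Prop) := hΓ
  let g := hwf.min {γ | c γ ≠ 0} hne
  have hg : c g ≠ 0 := hwf.min_mem {γ | c γ ≠ 0} hne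
  have hmin : ∀ γ < g, c γ = 0 := fun γ h => not_not.1 fun h' => hwf.not_lt_min _ h' h
  filter_upwards [(tendsto_tsum_mul_exp_sub hcsum hmin).eventually_ne hg] with t ht h0
  refine ht ?_
  have hfactor (γ : Γ) : c γ * Real.exp ((g - γ) * t) =
      c γ * Real.exp (-γ * t) * Real.exp (g * t) := by
    rw [mul_assoc, ← Real.exp_add]
    ring_nf
  simp only [hfactor, tsum_mul_right, (hc t).tsum_eq, h0, zero_mul]

lemma mul_mem_expSeries {M : AddSubmonoid ℝ} {f g : ℝ≥0 → ℝ} (hf : f ∈ expSeries M)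
    (hg : g ∈ expSeries M) : f * g ∈ expSeries M := by
  obtain ⟨c, hc⟩ := hf
  obtain ⟨d, hd⟩ := hg
  refine mem_expSeries_of_hasSum (ι := M × M) (c := fun p => c p.1 * d p.2)
    (γ := fun p => p.1 + p.2) (fun p => M.add_mem p.1.2 p.2.2) fun t => ?_
  refine ((hc t).mul (hd t) (summable_mul_of_summable_norm (hc t).summable.norm
    (hd t).summable.norm)).congr_fun fun p => ?_
  rw [neg_add, add_mul, Real.exp_add]
  ring

lemma one_mem_expSeries {M : AddSubmonoid ℝ} : 1 ∈ expSeries (M : Set ℝ) := by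
  convert exp_neg_mul_mem_expSeries M.zero_mem using 1
  funext t
  simp

/-- The ring of the series `∑ c_γ exp (-γ t)` with exponents in an additive monoid. -/
def expSeriesRing (M : AddSubmonoid ℝ) : Subalgebra ℝ (ℝ≥0 → ℝ) :=
  (expSeries M).toSubalgebra one_mem_expSeries fun _ _ => mul_mem_expSeries

lemma isDomain_expSeriesRing {M : AddSubmonoid ℝ} (hM : (M : Set ℝ).IsWF) :
    IsDomain (expSeriesRing M) := by
  have : NoZeroDivisors (expSeriesRing M) := ⟨fun {a b} hab => by
    by_contra! hne
    obtain ⟨t, ha, hb⟩ := ((eventually_ne_zero_of_mem_expSeries hM a.2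
      fun h => hne.1 (Subtype.ext h)).and (eventually_ne_zero_of_mem_expSeries hM b.2
      fun h => hne.2 (Subtype.ext h))).exists
    exact mul_ne_zero ha hb (congrFun (congrArg Subtype.val hab) t)⟩
  exact NoZeroDivisors.to_isDomain _

end ExpSeries

section ExpPowerSeries

open scoped NNReal

/-- A well-ordered set `Γ` of exponents whose differences lie in a well-ordered monoid `M` of
nonnegative exponents: after division by its leading exponential, a series with exponents in `Γ` has
its exponents in `M`. -/
structure IsExponentPair (Γ : Set ℝ) (M : AddSubmonoid ℝ) : Prop where
  isWF : Γ.IsWF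
  isWF_submonoid : (M : Set ℝ).IsWF
  nonneg : ∀ γ ∈ M, 0 ≤ γ
  sub_mem : ∀ γ ∈ Γ, ∀ γ' ∈ Γ, γ ≤ γ' → γ' - γ ∈ M

/-- The functions of `(t, s)` that are sums of convergent series `∑ b_{γ,n} exp (-γ t) s ^ n` with
`γ ∈ Γ`. -/
def expPowerSeries (Γ : Set ℝ) : Submodule ℝ (ℝ≥0 × ℝ → ℝ) where
  carrier := {f | ∃ b : Γ × ℕ → ℝ, ∀ z : ℝ≥0 × ℝ,
    HasSum (fun i => b i * Real.exp (-i.1 * z.1) * z.2 ^ i.2) (f z)}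
  zero_mem' := ⟨0, fun z => by simp⟩
  add_mem' := by
    rintro f g ⟨b, hb⟩ ⟨d, hd⟩
    exact ⟨b + d, fun z => by simpa only [Pi.add_apply, add_mul] using (hb z).add (hd z)⟩
  smul_mem' := by
    rintro a f ⟨b, hb⟩
    exact ⟨a • b, fun z => by
      simpa only [Pi.smul_apply, smul_eq_mul, mul_assoc] using (hb z).mul_left a⟩

lemma mul_exp_mem_expPowerSeries {Γ : Set ℝ} {f : ℝ≥0 → ℝ} (hf : f ∈ expSeries Γ) (a : ℝ) :
    (fun z : ℝ≥0 × ℝ => f z.1 * Real.exp (a * z.2)) ∈ expPowerSeries Γ := by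
  obtain ⟨c, hc⟩ := hf
  refine ⟨fun i => c i.1 * (a ^ i.2 / i.2.factorial), fun z => ?_⟩
  have hexp : HasSum (fun n : ℕ => (a * z.2) ^ n / n.factorial) (Real.exp (a * z.2)) := by
    rw [Real.exp_eq_exp_ℝ]
    exact NormedSpace.expSeries_div_hasSum_exp (a * z.2)
  refine ((hc z.1).mul hexp (summable_mul_of_summable_norm (hc z.1).summable.norm
    hexp.summable.norm)).congr_fun fun i => ?_
  rw [mul_pow]
  ring

end ExpPowerSeries

/-! ### Weierstrass division -/

section WordExpansion

variable {ι : Type*}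

lemma hasSum_pi_fin_prod {f : ι → ℝ} (hf0 : ∀ i, 0 ≤ f i) (hf : Summable f) (k : ℕ) :
    HasSum (fun v : Fin k → ι => ∏ j, f (v j)) ((∑' i, f i) ^ k) := by
  induction k with
  | zero => simp
  | succ k ih =>
    have hf0' : 0 ≤ f := hf0
    have hprod0 : (0 : (Fin k → ι) → ℝ) ≤ fun v => ∏ j, f (v j) := by
      intro v
      exact Finset.prod_nonneg fun j _ => hf0 (v j)
    have hmul := Summable.mul_of_nonneg hf ih.summable hf0' hprod0
    rw [pow_succ', ← (Fin.consEquiv fun _ => ι).hasSum_iff]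
    exact (hf.hasSum.mul ih hmul).congr_fun fun p => Fin.prod_univ_succ _

lemma hasSum_list_map_prod {f : ι → ℝ} (hf0 : ∀ i, 0 ≤ f i) (hf : Summable f)
    (hlt : ∑' i, f i < 1) :
    HasSum (fun l : List ι => (l.map f).prod) (1 - ∑' i, f i)⁻¹ := by
  have hgeom := hasSum_geometric_of_lt_one (tsum_nonneg hf0) hlt
  have hpow := hasSum_pi_fin_prod hf0 hf
  rw [← List.equivSigmaTuple.symm.hasSum_iff]
  have hprod : (fun l : List ι => (l.map f).prod) ∘ List.equivSigmaTuple.symm =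
      fun v : Σ k, Fin k → ι => ∏ j, f (v.2 j) := by
    funext v
    simp [List.equivSigmaTuple, List.map_ofFn, List.prod_ofFn]
  rw [hprod]
  have hsum : Summable fun v : Σ k, Fin k → ι => ∏ j, f (v.2 j) :=
    (summable_sigma_of_nonneg fun v => Finset.prod_nonneg fun j _ => hf0 _).2
      ⟨fun k => (hpow k).summable, by simpa only [(hpow _).tsum_eq] using hgeom.summable⟩
  exact hgeom.unique (hsum.hasSum.sigma hpow) ▸ hsum.hasSum

lemma hasSum_list_of_hasSum_cons {f : List ι → ℝ} {a : ℝ}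
    (h : HasSum (fun p : ι × List ι => f (p.1 :: p.2)) a) : HasSum f (f [] + a) := by
  have hinj : Function.Injective fun p : ι × List ι => p.1 :: p.2 := by
    rintro ⟨i, l⟩ ⟨j, m⟩ hp
    simpa using hp
  have hcompl : IsCompl {([] : List ι)} (range fun p : ι × List ι => p.1 :: p.2) := by
    refine isCompl_iff.2 ⟨by simp, codisjoint_iff.2 (eq_univ_of_forall ?_)⟩
    rintro (_ | ⟨i, l⟩)
    · exact Or.inl rfl
    · exact Or.inr ⟨(i, l), rfl⟩
  exact (hasSum_unique fun l : ({[]} : Set (List ι)) => f l).add_isCompl hcompl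
    (hinj.hasSum_range_iff.2 h)

end WordExpansion

section WeierstrassDivision

variable {ι : Type*} (y : ι → ℝ) (n : ι → ℕ) (d : ℕ)

/-- Weierstrass division of `σ ^ d` by `σ ^ d + ∑ y i * σ ^ n i` rewrites each `σ ^ N` with `d ≤ N`
as `-∑ y i * σ ^ (N - d + n i)`, over and over; a list records the choices of `i`, the
latest one first, and this is the exponent it leads to. -/
def wordDegree : List ι → ℕ
  | [] => d
  | i :: l => wordDegree l - d + n i

/-- The coefficient of the monomial that the successive rewritings recorded by a list lead to,
`0` if one of them does not apply. -/
def wordCoeff : List ι → ℝ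
  | [] => 1
  | i :: l => if d ≤ wordDegree n d l then -y i * wordCoeff l else 0

/-- The coefficient of `σ ^ k` in the remainder of the division of `σ ^ d` by
`σ ^ d + ∑ y i * σ ^ n i`. -/
def wordRemainder (k : ℕ) : ℝ :=
  ∑' l : List ι, if wordDegree n d l = k then wordCoeff y n d l else 0

/-- The quotient of the division of `σ ^ d` by `σ ^ d + ∑ y i * σ ^ n i`. -/
def wordQuotient (σ : ℝ) : ℝ :=
  ∑' l : List ι, wordCoeff y n d l *
    if d ≤ wordDegree n d l then σ ^ (wordDegree n d l - d) else 0

variable {y n d}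

lemma abs_wordCoeff_le (l : List ι) : |wordCoeff y n d l| ≤ (l.map fun i => |y i|).prod := by
  induction l with
  | nil => simp [wordCoeff]
  | cons i l ih =>
    rw [wordCoeff, List.map_cons, List.prod_cons]
    split_ifs
    · rw [abs_mul, abs_neg]
      gcongr
    · rw [abs_zero]
      exact mul_nonneg (abs_nonneg _) ((abs_nonneg _).trans ih)

lemma wordCoeff_mul (x : ι → ℝ) (l : List ι) :
    wordCoeff (fun i => y i * x i) n d l = wordCoeff y n d l * (l.map x).prod := by
  induction l with
  | nil => simp [wordCoeff]
  | cons i l ih =>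
    rw [wordCoeff, wordCoeff, List.map_cons, List.prod_cons, ih]
    split_ifs <;> ring

lemma abs_ite_pow_le_one {σ : ℝ} (hσ : |σ| ≤ 1) (p : Prop) [Decidable p] (k : ℕ) :
    |if p then σ ^ k else 0| ≤ 1 := by
  split_ifs
  · rw [abs_pow]
    exact pow_le_one₀ (abs_nonneg _) hσ
  · simp

variable (hy : Summable fun i => |y i|) (hlt : ∑' i, |y i| < 1 / 2)
include hy hlt

lemma summable_wordCoeff_mul {x : List ι → ℝ} (hx : ∀ l, |x l| ≤ 1) :
    Summable fun l => wordCoeff y n d l * x l := by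
  refine (hasSum_list_map_prod (fun i => abs_nonneg (y i)) hy
    (hlt.trans one_half_lt_one)).summable.of_norm_bounded fun l => ?_
  rw [Real.norm_eq_abs, abs_mul]
  exact mul_le_of_le_one_right (abs_nonneg _) (hx l) |>.trans (abs_wordCoeff_le l)

lemma tsum_wordCoeff_mul_pos {x : List ι → ℝ} (hx : ∀ l, |x l| ≤ 1) (hnil : x [] = 1) :
    0 < ∑' l, wordCoeff y n d l * x l := by
  have hprod := hasSum_list_map_prod (fun i => abs_nonneg (y i)) hy (hlt.trans one_half_lt_one)
  -- Both sums have the term `1` at `[]`, so they add up to at least `2`.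
  have hle : 2 - ∑' l, wordCoeff y n d l * x l ≤ (1 - ∑' i, |y i|)⁻¹ := by
    have hsum := (summable_wordCoeff_mul (n := n) (d := d) hy hlt hx).hasSum
    refine hasSum_le (fun l => ?_) ((hasSum_ite_eq ([] : List ι) (2 : ℝ)).sub hsum) hprod
    rcases eq_or_ne l [] with rfl | hl
    · norm_num [wordCoeff, hnil]
    · rw [if_neg hl, zero_sub]
      calc -(wordCoeff y n d l * x l) ≤ |wordCoeff y n d l| * |x l| := by
            rw [← abs_mul]; exact neg_le_abs _
        _ ≤ |wordCoeff y n d l| := mul_le_of_le_one_right (abs_nonneg _) (hx l)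
        _ ≤ _ := abs_wordCoeff_le l
  have hinv : (1 - ∑' i, |y i|)⁻¹ < 2 := by
    rw [inv_lt_comm₀ (by linarith) two_pos]
    linarith
  linarith

variable {σ : ℝ} (hσ : |σ| ≤ 1)
include hσ

lemma summable_wordQuotient : Summable fun l : List ι => wordCoeff y n d l *
    if d ≤ wordDegree n d l then σ ^ (wordDegree n d l - d) else 0 :=
  summable_wordCoeff_mul hy hlt fun _ => abs_ite_pow_le_one hσ _ _

lemma wordQuotient_pos : 0 < wordQuotient y n d σ :=
  tsum_wordCoeff_mul_pos hy hlt (fun _ => abs_ite_pow_le_one hσ _ _) (by simp [wordDegree])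

lemma sum_wordRemainder_mul_pow :
    ∑ k ∈ Finset.range d, wordRemainder y n d k * σ ^ k =
      ∑' l, wordCoeff y n d l *
        (if wordDegree n d l < d then σ ^ wordDegree n d l else 0) := by
  have hterm (k : ℕ) : wordRemainder y n d k * σ ^ k =
      ∑' l, wordCoeff y n d l * if wordDegree n d l = k then σ ^ k else 0 := by
    rw [wordRemainder, ← tsum_mul_right]
    refine tsum_congr fun l => ?_
    split_ifs <;> simp
  simp only [hterm]
  rw [← Summable.tsum_finsetSum fun k _ =>
    summable_wordCoeff_mul hy hlt fun l => abs_ite_pow_le_one hσ _ k]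
  refine tsum_congr fun l => ?_
  rw [← Finset.mul_sum, Finset.sum_ite_eq]
  simp only [Finset.mem_range]

lemma tsum_wordCoeff_mul_pow_eq_remainder_add :
    ∑' l, wordCoeff y n d l * σ ^ wordDegree n d l =
      ∑ k ∈ Finset.range d, wordRemainder y n d k * σ ^ k + σ ^ d * wordQuotient y n d σ := by
  rw [sum_wordRemainder_mul_pow hy hlt hσ, wordQuotient, ← tsum_mul_left, ← Summable.tsum_add
    (summable_wordCoeff_mul hy hlt fun l => abs_ite_pow_le_one hσ _ _)
    ((summable_wordQuotient hy hlt hσ).mul_left _)]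
  refine tsum_congr fun l => ?_
  rcases lt_or_ge (wordDegree n d l) d with hl | hl
  · simp only [hl, hl.not_ge, if_true, if_false, mul_zero, add_zero]
  · rw [if_neg hl.not_gt, if_pos hl, ← pow_sub_mul_pow σ hl]
    ring

lemma tsum_wordCoeff_mul_pow_eq_sub :
    ∑' l, wordCoeff y n d l * σ ^ wordDegree n d l =
      σ ^ d - (∑' i, y i * σ ^ n i) * wordQuotient y n d σ := by
  have hY : Summable fun i => ‖y i * σ ^ n i‖ := by
    refine hy.of_nonneg_of_le (fun i => norm_nonneg _) fun i => ?_
    rw [Real.norm_eq_abs, abs_mul, abs_pow]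
    exact mul_le_of_le_one_right (abs_nonneg _) (pow_le_one₀ (abs_nonneg _) hσ)
  have hT := summable_wordQuotient (n := n) (d := d) hy hlt hσ
  have hmul := summable_mul_of_summable_norm hY hT.norm
  have hcons : HasSum (fun p : ι × List ι =>
      wordCoeff y n d (p.1 :: p.2) * σ ^ wordDegree n d (p.1 :: p.2))
      (-((∑' i, y i * σ ^ n i) * wordQuotient y n d σ)) := by
    refine (hY.of_norm.hasSum.mul hT.hasSum hmul).neg.congr_fun fun p => ?_
    simp only [wordCoeff, wordDegree]
    split_ifs <;> ring
  rw [(hasSum_list_of_hasSum_cons (f := fun l => wordCoeff y n d l * σ ^ wordDegree n d l)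
    hcons).tsum_eq, wordCoeff, wordDegree, one_mul, sub_eq_add_neg]

theorem pow_sub_sum_wordRemainder_eq :
    σ ^ d - ∑ k ∈ Finset.range d, wordRemainder y n d k * σ ^ k =
      wordQuotient y n d σ * (σ ^ d + ∑' i, y i * σ ^ n i) := by
  linear_combination tsum_wordCoeff_mul_pow_eq_remainder_add (n := n) (d := d) hy hlt hσ -
    tsum_wordCoeff_mul_pow_eq_sub (n := n) (d := d) hy hlt hσ

end WeierstrassDivision

section WeierstrassPreparation

open Polynomial
open scoped NNReal

lemma tendsto_tsum_abs_mul_exp_mul_pow {ι : Type*} {p γ : ι → ℝ} {n : ι → ℕ} (hp : Summable p)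
    (hγ : ∀ i, 0 ≤ γ i) {δ : ℝ} (hδ0 : 0 ≤ δ) (hδ1 : δ ≤ 1) :
    Tendsto (fun A : ℝ≥0 => ∑' i, |p i| * Real.exp (-γ i * A) * δ ^ n i) atTop
      (𝓝 (∑' i, if γ i = 0 then |p i| * δ ^ n i else 0)) := by
  refine tendsto_tsum_of_dominated_convergence hp.abs (fun i => ?_)
    (Eventually.of_forall fun A i => ?_)
  · rcases (hγ i).eq_or_lt with h | h
    · simp [← h]
    · have hexp : Tendsto (fun A : ℝ≥0 => Real.exp (-γ i * A)) atTop (𝓝 0) :=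
        Real.tendsto_exp_atBot.comp ((NNReal.tendsto_coe_atTop.2 tendsto_id).const_mul_atTop_of_neg
          (neg_neg_of_pos h))
      simpa [h.ne'] using (hexp.const_mul |p i|).mul_const (δ ^ n i)
  · rw [Real.norm_of_nonneg (by positivity), mul_assoc]
    refine mul_le_of_le_one_right (abs_nonneg _) (mul_le_one₀ (Real.exp_le_one_iff.2 ?_)
      (by positivity) (pow_le_one₀ hδ0 hδ1))
    exact mul_nonpos_of_nonpos_of_nonneg (neg_nonpos.2 (hγ i)) A.2

lemma eventually_eventually_tsum_abs_lt {ι : Type*} {p γ : ι → ℝ} {n : ι → ℕ} {d : ℕ}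
    (hp : Summable p) (hγ : ∀ i, 0 ≤ γ i) (hlead : ∀ i, p i ≠ 0 → γ i = 0 → d < n i)
    {ε : ℝ} (hε : 0 < ε) :
    ∀ᶠ δ in 𝓝[>] (0 : ℝ), ∀ᶠ A : ℝ≥0 in atTop,
      ∑' i, |p i| * Real.exp (-γ i * A) * δ ^ n i < ε * δ ^ d := by
  let P := ∑' i, |p i|
  have hsmall : ∀ᶠ δ in 𝓝[>] (0 : ℝ), P * δ < ε := by
    have : Tendsto (fun δ : ℝ => P * δ) (𝓝 0) (𝓝 0) := by
      simpa using (continuous_const_mul P).tendsto 0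
    exact (this.eventually_lt_const hε).filter_mono nhdsWithin_le_nhds
  have hone : ∀ᶠ δ in 𝓝[>] (0 : ℝ), δ ∈ Ioo (0 : ℝ) 1 := Ioo_mem_nhdsGT one_pos
  filter_upwards [hsmall, hone] with δ hδ ⟨hδ0, hδ1⟩
  refine (tendsto_tsum_abs_mul_exp_mul_pow hp hγ hδ0.le hδ1.le).eventually_lt_const ?_
  have hterm (i : ι) : (if γ i = 0 then |p i| * δ ^ n i else 0) ≤ |p i| * δ ^ (d + 1) := by
    split_ifs with h
    · rcases eq_or_ne (p i) 0 with hpi | hpi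
      · simp [hpi]
      · exact mul_le_mul_of_nonneg_left
          (pow_le_pow_of_le_one hδ0.le hδ1.le (hlead i hpi h)) (abs_nonneg _)
    · positivity
  have hsum : Summable fun i => |p i| * δ ^ (d + 1) := hp.abs.mul_right _
  calc ∑' i, (if γ i = 0 then |p i| * δ ^ n i else 0) ≤ ∑' i, |p i| * δ ^ (d + 1) :=
        (hsum.of_nonneg_of_le (fun i => by split_ifs <;> positivity) hterm).tsum_le_tsum hterm hsum
    _ = P * δ * δ ^ d := by rw [tsum_mul_right, pow_succ']; ring
    _ < ε * δ ^ d := by gcongr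

lemma exists_leading_index {Γ : Set ℝ} (hΓ : Γ.IsWF) {b : Γ × ℕ → ℝ} (hb : b ≠ 0) :
    ∃ g d, b (g, d) ≠ 0 ∧ ∀ i, b i ≠ 0 → g ≤ i.1 ∧ (i.1 = g → d ≤ i.2) := by
  have hwf : WellFounded ((· < ·) : Γ → Γ → Prop) := hΓ
  obtain ⟨⟨g, d⟩, hgd, hmin⟩ := (hwf.prod_lex (wellFounded_lt (α := ℕ))).has_min {i | b i ≠ 0}
    (Function.ne_iff.1 hb)
  simp only [Prod.lex_def, not_or, not_and, not_lt] at hmin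
  exact ⟨g, d, hgd, hmin⟩

lemma exists_leading_term {Γ : Set ℝ} {M : AddSubmonoid ℝ} (hΓM : IsExponentPair Γ M)
    {f : ℝ≥0 × ℝ → ℝ} (hf : f ∈ expPowerSeries Γ) (hf0 : f ≠ 0) :
    ∃ (g c : ℝ) (d : ℕ) (p γ : Γ × ℕ → ℝ), c ≠ 0 ∧ (∀ i, γ i ∈ M) ∧
      (∀ i, p i ≠ 0 → γ i = 0 → d < i.2) ∧ ∀ z : ℝ≥0 × ℝ,
        HasSum (fun i => p i * Real.exp (-γ i * z.1) * z.2 ^ i.2)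
          (c⁻¹ * Real.exp (g * z.1) * f z - z.2 ^ d) := by
  classical
  obtain ⟨b, hb⟩ := hf
  have hb0 : b ≠ 0 := by
    rintro rfl
    exact hf0 (funext fun z => (hb z).unique (by simp))
  obtain ⟨g, d, hgd, hmin⟩ := exists_leading_index hΓM.isWF hb0
  refine ⟨g, b (g, d), d, fun i => if i = (g, d) then 0 else (b (g, d))⁻¹ * b i,
    fun i => max (i.1 - g) 0, hgd, fun i => ?_, fun i hi hi0 => ?_, fun z => ?_⟩
  · rcases le_total (g : ℝ) i.1 with h | h
    · simpa only [max_eq_left (sub_nonneg.2 h)] using hΓM.sub_mem g g.2 i.1 i.1.2 h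
    · simpa only [max_eq_right (sub_nonpos.2 h)] using M.zero_mem
  · obtain ⟨hig, hbi⟩ : i ≠ (g, d) ∧ b i ≠ 0 := by simpa [hgd] using hi
    have hle : (i.1 : ℝ) ≤ g := sub_nonpos.1 (max_eq_right_iff.1 hi0)
    have heq : i.1 = g := le_antisymm hle (hmin i hbi).1
    exact ((hmin i hbi).2 heq).lt_of_ne fun h => hig (Prod.ext heq h.symm)
  · have hvalue : (b (g, d))⁻¹ * Real.exp (g * z.1) * f z - z.2 ^ d =
        (b (g, d))⁻¹ * Real.exp (g * z.1) *
          (f z - b (g, d) * Real.exp (-g * z.1) * z.2 ^ d) := by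
      rw [neg_mul, Real.exp_neg]
      field_simp
    rw [hvalue]
    refine (((hb z).sub (hasSum_ite_eq (g, d) _)).mul_left _).congr_fun fun i => ?_
    rcases eq_or_ne i (g, d) with rfl | hi
    · simp
    rcases eq_or_ne (b i) 0 with hbi | hbi
    · simp [hbi, hi]
    have hle : (g : ℝ) ≤ i.1 := (hmin i hbi).1
    simp only [if_neg hi, max_eq_left (sub_nonneg.2 hle)]
    rw [show -((i.1 : ℝ) - g) * z.1 = g * z.1 + -i.1 * z.1 by ring, Real.exp_add]
    ring

lemma wordRemainder_mem_expSeries {M : AddSubmonoid ℝ} (hM : ∀ γ ∈ M, 0 ≤ γ) {ι : Type*}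
    {q γ : ι → ℝ} (hγ : ∀ i, γ i ∈ M) (hq : Summable fun i => |q i|) (hlt : ∑' i, |q i| < 1 / 2)
    (n : ι → ℕ) (d k : ℕ) :
    (fun t : ℝ≥0 => wordRemainder (fun i => q i * Real.exp (-γ i * t)) n d k) ∈ expSeries M := by
  classical
  have hexp (t : ℝ≥0) (l : List ι) :
      (l.map fun i => Real.exp (-γ i * t)).prod = Real.exp (-(l.map γ).sum * t) := by
    induction l with
    | nil => simp
    | cons i l ih =>
      rw [List.map_cons, List.prod_cons, ih, ← Real.exp_add, List.map_cons, List.sum_cons]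
      ring_nf
  have hmem (l : List ι) : (l.map γ).sum ∈ M := M.list_sum_mem (by simpa using fun i _ => hγ i)
  refine mem_expSeries_of_hasSum
    (c := fun l => if wordDegree n d l = k then wordCoeff q n d l else 0)
    (γ := fun l : List ι => (l.map γ).sum) hmem fun t => ?_
  have hsum : Summable fun l : List ι => wordCoeff q n d l *
      if wordDegree n d l = k then Real.exp (-(l.map γ).sum * t) else 0 := by
    refine summable_wordCoeff_mul hq hlt fun l => ?_
    split_ifs
    · rw [Real.abs_exp, Real.exp_le_one_iff]
      exact mul_nonpos_of_nonpos_of_nonneg (neg_nonpos.2 (hM _ (hmem l))) t.2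
    · simp
  have hterm (l : List ι) : (wordCoeff q n d l *
      if wordDegree n d l = k then Real.exp (-(l.map γ).sum * t) else 0) =
      (if wordDegree n d l = k then wordCoeff q n d l else 0) * Real.exp (-(l.map γ).sum * t) := by
    split_ifs <;> simp
  simp only [hterm] at hsum
  convert hsum.hasSum using 1
  refine tsum_congr fun l => ?_
  rw [wordCoeff_mul, hexp, ite_zero_mul]

/-- Evaluation at `t`, as a ring homomorphism. -/
def expSeriesEval (M : AddSubmonoid ℝ) (t : ℝ≥0) : expSeriesRing M →+* ℝ :=
  (Pi.evalRingHom (fun _ => ℝ) t).comp (expSeriesRing M).val.toRingHom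

lemma exists_polynomial_evalAt_eq {M : AddSubmonoid ℝ} (hM : ∀ γ ∈ M, 0 ≤ γ) {ι : Type*}
    {q γ : ι → ℝ} (hγ : ∀ i, γ i ∈ M) (hq : Summable fun i => |q i|) (hlt : ∑' i, |q i| < 1 / 2)
    (n : ι → ℕ) (d : ℕ) {c : ℝ} (hc : c ≠ 0) :
    ∃ W : (expSeriesRing M)[X], (∀ t, W.map (expSeriesEval M t) ≠ 0) ∧
      ∀ z : ℝ≥0 × ℝ, |z.2| ≤ 1 → ∃ u > 0, evalAt (expSeriesEval M) z W =
        u * (c * (z.2 ^ d + ∑' i, q i * Real.exp (-γ i * z.1) * z.2 ^ n i)) := by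
  let H (k : ℕ) : expSeriesRing M := ⟨_, wordRemainder_mem_expSeries hM hγ hq hlt n d k⟩
  let W : (expSeriesRing M)[X] :=
    C (algebraMap ℝ _ c) * (X ^ d - ∑ k ∈ Finset.range d, C (H k) * X ^ k)
  have heval (z : ℝ≥0 × ℝ) : evalAt (expSeriesEval M) z W = c * (z.2 ^ d -
      ∑ k ∈ Finset.range d,
        wordRemainder (fun i => q i * Real.exp (-γ i * z.1)) n d k * z.2 ^ k) := by
    simp only [W, map_mul, map_sub, map_pow, map_sum, evalAt_C, evalAt_X]
    rfl
  refine ⟨W, fun t h => hc ?_, fun z hz => ?_⟩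
  · have hcoeff : (W.map (expSeriesEval M t)).coeff d = expSeriesEval M t (algebraMap ℝ _ c) := by
      simp [W, coeff_X_pow]
    rw [h, coeff_zero] at hcoeff
    exact hcoeff.symm
  · have hle (i : ι) : |q i * Real.exp (-γ i * z.1)| ≤ |q i| := by
      rw [abs_mul, Real.abs_exp]
      refine mul_le_of_le_one_right (abs_nonneg _) (Real.exp_le_one_iff.2 ?_)
      exact mul_nonpos_of_nonpos_of_nonneg (neg_nonpos.2 (hM _ (hγ i))) z.1.2
    have hsum : Summable fun i => |q i * Real.exp (-γ i * z.1)| :=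
      hq.of_nonneg_of_le (fun _ => abs_nonneg _) hle
    have hlt' := (hsum.tsum_le_tsum hle hq).trans_lt hlt
    refine ⟨_, wordQuotient_pos (n := n) (d := d) hsum hlt' hz, ?_⟩
    rw [heval, pow_sub_sum_wordRemainder_eq hsum hlt' hz]
    ring

theorem eventually_exists_preparation {Γ : Set ℝ} {M : AddSubmonoid ℝ} (hΓM : IsExponentPair Γ M)
    {f : ℝ≥0 × ℝ → ℝ} (hf : f ∈ expPowerSeries Γ) (hf0 : f ≠ 0) :
    ∀ᶠ δ in 𝓝[>] (0 : ℝ), ∀ᶠ A : ℝ≥0 in atTop, ∃ W : (expSeriesRing M)[X],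
      (∀ t, W.map (expSeriesEval M t) ≠ 0) ∧ ∀ z : ℝ≥0 × ℝ, |z.2| ≤ 1 →
        ∃ u > 0, evalAt (expSeriesEval M) z W = u * f (A + z.1, δ * z.2) := by
  obtain ⟨g, c, d, p, γ, hc, hγ, hlead, hsum⟩ := exists_leading_term hΓM hf hf0
  have hp : Summable p := by simpa using (hsum (0, 1)).summable
  filter_upwards [self_mem_nhdsWithin, eventually_eventually_tsum_abs_lt hp
    (fun i => hΓM.nonneg _ (hγ i)) hlead one_half_pos] with δ (hδ : 0 < δ) hsmall
  filter_upwards [hsmall] with A hA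
  have hδd : 0 < δ ^ d := pow_pos hδ d
  let q (i : Γ × ℕ) : ℝ := p i * Real.exp (-γ i * A) * δ ^ i.2 / δ ^ d
  have habs (i : Γ × ℕ) : |q i| = |p i| * Real.exp (-γ i * A) * δ ^ i.2 / δ ^ d := by
    simp only [q, abs_div, abs_mul, Real.abs_exp, abs_pow, abs_of_pos hδ]
  have hq : Summable fun i => |q i| := ((hsum (A, δ)).summable.div_const _).abs
  have hlt : ∑' i, |q i| < 1 / 2 := by
    simp only [habs, tsum_div_const]
    rwa [div_lt_iff₀ hδd]
  obtain ⟨W, hW0, hW⟩ :=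
    exists_polynomial_evalAt_eq (fun γ => hΓM.nonneg γ) hγ hq hlt Prod.snd d hc
  refine ⟨W, hW0, fun z hz => ?_⟩
  obtain ⟨u, hu, hWz⟩ := hW z hz
  refine ⟨u * Real.exp (g * (A + z.1)) / δ ^ d, by positivity, ?_⟩
  have hscale (i : Γ × ℕ) : q i * Real.exp (-γ i * z.1) * z.2 ^ i.2 =
      p i * Real.exp (-γ i * (A + z.1 : ℝ≥0)) * (δ * z.2) ^ i.2 / δ ^ d := by
    rw [NNReal.coe_add, mul_add, Real.exp_add, mul_pow]
    ring
  rw [hWz, tsum_congr hscale, tsum_div_const, (hsum (A + z.1, δ * z.2)).tsum_eq,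
    NNReal.coe_add, mul_pow]
  field_simp
  ring

lemma forall_evalAt_elim_pos_iff {T R κ : Type*} [CommRing R] {φ : T → R →+* ℝ} {W : κ → R[X]}
    {z : T × ℝ} :
    (∀ k, 0 < evalAt φ z (Sum.elim W (fun b => if b then 1 - X else 1 + X : Bool → R[X]) k)) ↔
      |z.2| < 1 ∧ ∀ k, 0 < evalAt φ z (W k) := by
  simp only [Sum.forall, Sum.elim_inl, Sum.elim_inr, Bool.forall_bool, Bool.false_eq_true,
    if_true, if_false, map_add, map_sub, map_one, evalAt_X, sub_pos, abs_lt, neg_lt_iff_pos_add']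
  tauto

lemma exists_isPreconnected_of_forall_evalAt_eq {T R κ : Type*} [CommRing R] [IsDomain R]
    [ConditionallyCompleteLinearOrder T] [TopologicalSpace T] [OrderTopology T] [DenselyOrdered T]
    [Nonempty T] [Finite κ] {φ : T → R →+* ℝ} {W : κ → R[X]} {F : κ → T × ℝ → ℝ}
    (hφ : ∀ r, Continuous fun t => φ t r) (hφ0 : ∀ r ≠ 0, ∀ᶠ t in atTop, φ t r ≠ 0)
    (hW : ∀ t k, (W k).map (φ t) ≠ 0)
    (hWF : ∀ k z, |z.2| ≤ 1 → ∃ u > 0, evalAt φ z (W k) = u * F k z)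
    (hord : ∀ t, OrdConnected {s | ∀ k, 0 < F k (t, s)})
    (hend : ∀ t k, ∀ a b : ℝ, a < b → (∀ s ∈ Ioo a b, ∀ k, 0 < F k (t, s)) →
      ¬(F k (t, a) = 0 ∧ F k (t, b) = 0)) :
    ∃ t₀, IsPreconnected {z : T × ℝ | t₀ < z.1 ∧ |z.2| < 1 ∧ ∀ k, 0 < F k z} := by
  let W' : κ ⊕ Bool → R[X] := Sum.elim W fun b => if b then 1 - X else 1 + X
  have hpos (z : T × ℝ) : (∀ k, 0 < evalAt φ z (W' k)) ↔ |z.2| < 1 ∧ ∀ k, 0 < F k z := by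
    refine forall_evalAt_elim_pos_iff.trans (and_congr_right fun hz => forall_congr' fun k => ?_)
    obtain ⟨u, hu, hWz⟩ := hWF k z hz.le
    rw [hWz, mul_pos_iff_of_pos_left hu]
  have hfiber (t : T) : positiveFiber φ W' t = Ioo (-1) 1 ∩ {s | ∀ k, 0 < F k (t, s)} := by
    ext s
    exact (hpos (t, s)).trans (and_congr_left' abs_lt)
  have hW' (t : T) : ∀ k, (W' k).map (φ t) ≠ 0 := by
    have hne (P : R[X]) (h : evalAt φ (t, 0) P = 1) : P.map (φ t) ≠ 0 := fun h0 => by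
      rw [evalAt_eq_eval_map, h0, eval_zero] at h
      exact zero_ne_one h
    rintro (k | b)
    · exact hW t k
    · cases b <;> exact hne _ (by simp [W'])
  have hend' (t : T) (k) (a b : ℝ) (hab : a < b) (hIoo : Ioo a b ⊆ positiveFiber φ W' t) :
      ¬(evalAt φ (t, a) (W' k) = 0 ∧ evalAt φ (t, b) (W' k) = 0) := by
    rw [hfiber, subset_inter_iff, Ioo_subset_Ioo_iff hab] at hIoo
    obtain ⟨⟨ha, hb⟩, hF⟩ := hIoo
    rcases k with k | _ | _
    · obtain ⟨u, hu, hWa⟩ := hWF k (t, a) (abs_le.2 ⟨ha, (hab.trans_le hb).le⟩)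
      obtain ⟨v, hv, hWb⟩ := hWF k (t, b) (abs_le.2 ⟨(ha.trans_lt hab).le, hb⟩)
      simpa [W', hWa, hWb, hu.ne', hv.ne'] using hend t k a b hab hF
    · simp only [W', Sum.elim_inr, Bool.false_eq_true, if_false, map_add, map_one, evalAt_X]
      exact fun h => by linarith [h.1, h.2]
    · simp only [W', Sum.elim_inr, if_true, map_sub, map_one, evalAt_X]
      exact fun h => by linarith [h.1, h.2]
  simpa only [hpos] using exists_isPreconnected_setOf_forall_evalAt_pos hφ hφ0 isCompact_Icc hW'
    (fun t => (hfiber t).trans_subset (inter_subset_left.trans Ioo_subset_Icc_self))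
    (fun t => (hfiber t).symm ▸ ordConnected_Ioo.inter (hord t)) hend'

theorem exists_isPreconnected_setOf_forall_pos {Γ : Set ℝ} {M : AddSubmonoid ℝ}
    (hΓM : IsExponentPair Γ M) {κ : Type*} [Finite κ] {f : κ → ℝ≥0 × ℝ → ℝ}
    (hf : ∀ k, f k ∈ expPowerSeries Γ) (hf0 : ∀ k, f k ≠ 0) {rank : κ → ℕ}
    (hrolle : ∀ t, IsRolleSystem rank fun k s => f k (t, s)) :
    ∃ δ > 0, ∃ A, IsPreconnected {z : ℝ≥0 × ℝ | A < z.1 ∧ |z.2| < δ ∧ ∀ k, 0 < f k z} := by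
  have := isDomain_expSeriesRing hΓM.isWF_submonoid
  obtain ⟨δ, hδW, hδ : 0 < δ⟩ := ((eventually_all.2 fun k =>
    eventually_exists_preparation hΓM (hf k) (hf0 k)).and self_mem_nhdsWithin).exists
  obtain ⟨A, hA⟩ := (eventually_all.2 hδW).exists
  choose W hW hWf using hA
  have hend (t : ℝ≥0) (k : κ) (a b : ℝ) (hab : a < b)
      (hpos : ∀ s ∈ Ioo a b, ∀ k, 0 < f k (A + t, δ * s)) :
      ¬(f k (A + t, δ * a) = 0 ∧ f k (A + t, δ * b) = 0) := by
    refine (hrolle (A + t)).not_eq_zero_and_eq_zero (mul_lt_mul_of_pos_left hab hδ)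
      (fun s hs k => ?_) k
    have := hpos (s / δ) ⟨(lt_div_iff₀' hδ).2 hs.1, (div_lt_iff₀' hδ).2 hs.2⟩ k
    rwa [mul_div_cancel₀ _ hδ.ne'] at this
  obtain ⟨t₀, ht₀⟩ := exists_isPreconnected_of_forall_evalAt_eq (φ := expSeriesEval M) (W := W)
    (F := fun k z => f k (A + z.1, δ * z.2))
    (fun r => continuous_of_mem_expSeries hΓM.nonneg r.2)
    (fun r hr => eventually_ne_zero_of_mem_expSeries hΓM.isWF_submonoid r.2
      fun h => hr (Subtype.ext h))
    (fun t k => hW k t) hWf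
    (fun t => (hrolle (A + t)).ordConnected_setOf_pos.preimage_mono
      (monotone_mul_left_of_nonneg hδ.le)) hend
  refine ⟨δ, hδ, A + t₀, ?_⟩
  convert ht₀.image (fun z => (A + z.1, δ * z.2)) (by fun_prop) using 1
  ext ⟨t, s⟩
  constructor
  · rintro ⟨ht, hs, hpos⟩
    have heq : ((A + (t - A), δ * (s / δ)) : ℝ≥0 × ℝ) = (t, s) := by
      rw [add_tsub_cancel_of_le (le_self_add.trans ht.le), mul_div_cancel₀ _ hδ.ne']
    refine ⟨(t - A, s / δ), ⟨lt_tsub_iff_left.2 ht, ?_, ?_⟩, heq⟩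
    · rwa [abs_div, abs_of_pos hδ, div_lt_one hδ]
    · simpa only [heq] using hpos
  · rintro ⟨⟨τ, σ⟩, ⟨hτ, hσ, hpos⟩, heq⟩
    obtain ⟨rfl, rfl⟩ := Prod.ext_iff.1 heq
    refine ⟨add_lt_add_right hτ A, ?_, hpos⟩
    rw [abs_mul, abs_of_pos hδ]
    exact mul_lt_of_lt_one_right hδ hσ

end WeierstrassPreparation

/-! ### Exponential sums -/

section DerivClosed

variable {E : Type*} [AddCommGroup E] [Module ℝ E] {v : E}

/-- A set of ranked functions on `E` is closed under differentiation along `v` when the derivative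
of each member is, up to a multiple of the member, zero or a member of smaller rank. -/
def IsDerivClosed (v : E) (S : Set (ℕ × (E → ℝ))) : Prop :=
  ∀ p ∈ S, ∃ (α : ℝ) (f' : E → ℝ),
    (∀ x s, HasDerivAt (fun s : ℝ => p.2 (x + s • v)) (α * p.2 (x + s • v) + f' (x + s • v)) s) ∧
      (f' = 0 ∨ ∃ n < p.1, (n, f') ∈ S)

lemma IsDerivClosed.insert {S : Set (ℕ × (E → ℝ))} (hS : IsDerivClosed v S) {m n : ℕ} {α : ℝ}
    {f f' : E → ℝ} (hderiv : ∀ x s,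
      HasDerivAt (fun s : ℝ => f (x + s • v)) (α * f (x + s • v) + f' (x + s • v)) s)
    (hmn : m < n) (hf' : (m, f') ∈ S) : IsDerivClosed v (insert (n, f) S) := by
  rintro p (rfl | hp)
  · exact ⟨α, f', hderiv, Or.inr ⟨m, hmn, Or.inr hf'⟩⟩
  · obtain ⟨β, g, hg, hgS⟩ := hS p hp
    exact ⟨β, g, hg, hgS.imp_right fun ⟨m, hm, hmS⟩ => ⟨m, hm, Or.inr hmS⟩⟩

lemma IsDerivClosed.biUnion {ι : Type*} {s : Set ι} {S : ι → Set (ℕ × (E → ℝ))}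
    (h : ∀ i ∈ s, IsDerivClosed v (S i)) : IsDerivClosed v (⋃ i ∈ s, S i) := by
  intro p hp
  obtain ⟨i, hi, hpi⟩ := mem_iUnion₂.1 hp
  obtain ⟨α, f', hderiv, hf'⟩ := h i hi p hpi
  exact ⟨α, f', hderiv, hf'.imp_right fun ⟨n, hn, hnS⟩ => ⟨n, hn, mem_biUnion hi hnS⟩⟩

end DerivClosed

section ExpSum

variable {E : Type*} [AddCommGroup E] [Module ℝ E] [TopologicalSpace E]

/-- The span of the exponentials of the linear functionals in `L`. -/
def expSpan (L : Set (E →L[ℝ] ℝ)) : Submodule ℝ (E → ℝ) :=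
  Submodule.span ℝ ((fun l x => Real.exp (l x)) '' L)

variable {L : Set (E →L[ℝ] ℝ)} {f : E → ℝ} {v : E}

lemma expSpan_mono {L' : Set (E →L[ℝ] ℝ)} (h : L ⊆ L') : expSpan L ≤ expSpan L' :=
  Submodule.span_mono (image_mono h)

lemma exp_mem_expSpan {l : E →L[ℝ] ℝ} (hl : l ∈ L) : (fun x => Real.exp (l x)) ∈ expSpan L :=
  Submodule.subset_span (mem_image_of_mem _ hl)

lemma exists_finite_mem_expSpan (hf : f ∈ expSpan L) : ∃ L' ⊆ L, L'.Finite ∧ f ∈ expSpan L' := by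
  obtain ⟨T, hT, hfT⟩ := Submodule.mem_span_finite_of_mem_span hf
  exact exists_subset_image_finite_and (p := fun t => f ∈ Submodule.span ℝ t).1
    ⟨T, hT, T.finite_toSet, hfT⟩

lemma one_mem_expSpan_univ : (1 : E → ℝ) ∈ expSpan univ := by
  convert exp_mem_expSpan (mem_univ (0 : E →L[ℝ] ℝ)) using 1
  funext x
  simp

lemma mul_mem_expSpan_univ {f g : E → ℝ} (hf : f ∈ expSpan univ) (hg : g ∈ expSpan univ) :
    f * g ∈ expSpan univ := by
  refine (Submodule.span_mul_span ℝ _ _).trans_le (Submodule.span_mono ?_)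
    (Submodule.mul_mem_mul hf hg)
  rintro _ ⟨_, ⟨l, -, rfl⟩, _, ⟨l', -, rfl⟩, rfl⟩
  exact ⟨l + l', mem_univ _, funext fun x => Real.exp_add _ _⟩

variable (E) in
/-- The algebra of exponential sums `∑ c_i exp (l_i x)` on `E`. -/
def expSum : Subalgebra ℝ (E → ℝ) :=
  (expSpan univ).toSubalgebra one_mem_expSpan_univ fun _ _ => mul_mem_expSpan_univ

lemma exp_mem_expSum (l : E →L[ℝ] ℝ) : (fun x => Real.exp (l x)) ∈ expSum E :=
  exp_mem_expSpan (mem_univ l)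

lemma continuous_of_mem_expSum (hf : f ∈ expSum E) : Continuous f := by
  change f ∈ expSpan univ at hf
  induction hf using Submodule.span_induction with
  | mem f hf =>
    obtain ⟨l, -, rfl⟩ := hf
    fun_prop
  | zero => exact continuous_zero
  | add f g _ _ hf hg => exact hf.add hg
  | smul a f _ hf => exact hf.const_smul a

lemma exists_finite_subset_expSpan {s : Set (E → ℝ)} (hs : s.Finite)
    (hsE : ∀ f ∈ s, f ∈ expSum E) : ∃ L : Set (E →L[ℝ] ℝ), L.Finite ∧ ∀ f ∈ s, f ∈ expSpan L := by
  choose! L _ hLfin hL using fun f hf => exists_finite_mem_expSpan (hsE f hf)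
  exact ⟨⋃ f ∈ s, L f, hs.biUnion hLfin,
    fun f hf => expSpan_mono (subset_biUnion_of_mem hf) (hL f hf)⟩

lemma exists_hasDerivAt_of_mem_expSpan {α : ℝ} {F : Set ℝ}
    (hf : f ∈ expSpan {l ∈ L | l v ∈ insert α F}) :
    ∃ f' ∈ expSpan {l ∈ L | l v ∈ F}, ∀ x s,
      HasDerivAt (fun s : ℝ => f (x + s • v)) (α * f (x + s • v) + f' (x + s • v)) s := by
  induction hf using Submodule.span_induction with
  | mem f hf =>
    obtain ⟨l, ⟨hl, hlv⟩, rfl⟩ := hf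
    refine ⟨(l v - α) • fun x => Real.exp (l x), ?_, fun x s => ?_⟩
    · rcases hlv with rfl | hlv
      · simp
      · exact Submodule.smul_mem _ _ (exp_mem_expSpan ⟨hl, hlv⟩)
    · have hline : HasDerivAt (fun s : ℝ => l (x + s • v)) (l v) s := by
        simpa only [map_add, map_smul, smul_eq_mul] using
          (hasDerivAt_mul_const (l v)).const_add (l x)
      exact hline.exp.congr_deriv (by simp only [Pi.smul_apply, smul_eq_mul]; ring)
  | zero => exact ⟨0, zero_mem _, fun x s => by simpa using hasDerivAt_const s 0⟩
  | add f g _ _ hf hg =>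
    obtain ⟨f', hf', hderivf⟩ := hf
    obtain ⟨g', hg', hderivg⟩ := hg
    exact ⟨f' + g', add_mem hf' hg', fun x s => ((hderivf x s).add (hderivg x s)).congr_deriv (by
      simp only [Pi.add_apply]; ring)⟩
  | smul a f _ hf =>
    obtain ⟨f', hf', hderiv⟩ := hf
    exact ⟨a • f', Submodule.smul_mem _ a hf', fun x s => ((hderiv x s).const_mul a).congr_deriv (by
      simp only [Pi.smul_apply, smul_eq_mul]; ring)⟩

/-- For two exponents `α ≠ β` along `v`, the functions `∂_v f - α f` and `∂_v f - β f` cannot both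
lie in `I`. -/
lemma exists_hasDerivAt_notMem_of_mem_expSpan {I : Submodule ℝ (E → ℝ)} {F : Finset ℝ}
    (hf : f ∈ expSpan {l ∈ L | l v ∈ F}) (hfI : f ∉ I) :
    ∃ α ∈ F, ∃ f' ∈ expSpan {l ∈ L | l v ∈ F.erase α}, (f' = 0 ∨ f' ∉ I) ∧ ∀ x s,
      HasDerivAt (fun s : ℝ => f (x + s • v)) (α * f (x + s • v) + f' (x + s • v)) s := by
  have hderiv (α : ℝ) (hα : α ∈ F) := exists_hasDerivAt_of_mem_expSpan (v := v) (L := L) (f := f)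
    (α := α) (F := (F.erase α : Finset ℝ)) (by
      rw [← Finset.coe_insert, Finset.insert_erase hα]
      exact hf)
  choose! f' hf' hderiv using hderiv
  have hF : F.Nonempty := Finset.nonempty_iff_ne_empty.2 fun hF => hfI <| by
    rw [show f = 0 by simpa [hF, expSpan] using hf]
    exact I.zero_mem
  obtain ⟨α, hα⟩ := hF
  by_cases hα' : f' α = 0 ∨ f' α ∉ I
  · exact ⟨α, hα, f' α, hf' α hα, hα', hderiv α hα⟩
  rw [not_or, not_not] at hα'
  have hF' : (F.erase α).Nonempty := Finset.nonempty_iff_ne_empty.2 fun hF' => hα'.1 <| by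
    simpa [hF', expSpan] using hf' α hα
  obtain ⟨β, hβ⟩ := hF'
  obtain ⟨hβα, hβ⟩ := Finset.mem_erase.1 hβ
  have hsub : f' α - f' β = (β - α) • f := funext fun x => by
    have := (hderiv α hα x 0).unique (hderiv β hβ x 0)
    simp only [zero_smul, add_zero] at this
    simp only [Pi.sub_apply, Pi.smul_apply, smul_eq_mul]
    linarith
  refine ⟨β, hβ, f' β, hf' β hβ, Or.inr fun hβI => hfI ?_, hderiv β hβ⟩
  rw [← I.smul_mem_iff (sub_ne_zero.2 hβα), ← hsub]
  exact I.sub_mem hα'.2 hβI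

lemma exists_isDerivClosed_of_mem_expSpan {I : Submodule ℝ (E → ℝ)} {F : Finset ℝ}
    (hf : f ∈ expSpan {l ∈ L | l v ∈ F}) (hfI : f ∉ I) :
    ∃ S, S.Finite ∧ IsDerivClosed v S ∧ (F.card, f) ∈ S ∧ ∀ p ∈ S, p.2 ∈ expSum E ∧ p.2 ∉ I := by
  induction hn : F.card using Nat.strong_induction_on generalizing F f with
  | _ n ih =>
    subst hn
    have hfE : f ∈ expSum E := expSpan_mono (subset_univ _) hf
    obtain ⟨α, hα, f', hf', rfl | hf'I, hderiv⟩ := exists_hasDerivAt_notMem_of_mem_expSpan hf hfI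
    · refine ⟨{(F.card, f)}, finite_singleton _, ?_, rfl, ?_⟩
      · rintro _ rfl
        exact ⟨α, 0, hderiv, Or.inl rfl⟩
      · rintro _ rfl
        exact ⟨hfE, hfI⟩
    · have hcard := Finset.card_erase_lt_of_mem hα
      obtain ⟨S, hSfin, hS, hf'S, hSI⟩ := ih _ hcard hf' hf'I rfl
      exact ⟨_, hSfin.insert _, hS.insert hderiv hcard hf'S, mem_insert _ _,
        forall_mem_insert.2 ⟨⟨hfE, hfI⟩, hSI⟩⟩

lemma exists_isDerivClosed {I : Submodule ℝ (E → ℝ)} {s : Set (E → ℝ)} (hs : s.Finite)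
    (hsI : ∀ f ∈ s, f ∈ expSum E ∧ f ∉ I) (v : E) :
    ∃ S, S.Finite ∧ IsDerivClosed v S ∧ s ⊆ Prod.snd '' S ∧
      ∀ p ∈ S, p.2 ∈ expSum E ∧ p.2 ∉ I := by
  obtain ⟨L, hL, hsL⟩ := exists_finite_subset_expSpan hs fun f hf => (hsI f hf).1
  let F : Finset ℝ := (hL.image fun l => l v).toFinset
  have hLF : L ⊆ {l ∈ L | l v ∈ F} := fun l hl =>
    ⟨hl, (hL.image _).mem_toFinset.2 (mem_image_of_mem _ hl)⟩
  have hmem (f : E → ℝ) (hf : f ∈ s) :=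
    exists_isDerivClosed_of_mem_expSpan (expSpan_mono hLF (hsL f hf)) (hsI f hf).2
  choose! S hSfin hS hfS hSI using hmem
  refine ⟨⋃ f ∈ s, S f, hs.biUnion hSfin, IsDerivClosed.biUnion hS, fun f hf =>
    ⟨_, mem_biUnion hf (hfS f hf), rfl⟩, fun p hp => ?_⟩
  obtain ⟨f, hf, hpf⟩ := mem_iUnion₂.1 hp
  exact hSI f hf p hpf

end ExpSum

lemma IsDerivClosed.isRolleSystem {E : Type*} [AddCommGroup E] [Module ℝ E] {v : E}
    {S : Set (ℕ × (E → ℝ))} (hS : IsDerivClosed v S) {σ : S → ℝ} (hσ : ∀ p, σ p ≠ 0) (x : E) :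
    IsRolleSystem (fun p : S => p.1.1) fun p s => σ p * p.1.2 (x + s • v) := by
  intro p
  obtain ⟨α, f', hderiv, hf'⟩ := hS p p.2
  refine ⟨α, fun s => σ p * f' (x + s • v), fun s =>
    ((hderiv x s).const_mul (σ p)).congr_deriv (by ring), ?_⟩
  rcases hf' with rfl | ⟨n, hn, hnS⟩
  · exact Or.inl fun s _ => by simp
  let q : S := ⟨(n, f'), hnS⟩
  have hq (s : ℝ) : σ p * f' (x + s • v) = σ p / σ q * (σ q * f' (x + s • v)) := by
    rw [← mul_assoc, div_mul_cancel₀ _ (hσ q)]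
  simp only [hq]
  refine (le_total 0 (σ p / σ q)).imp (fun h s hs => ?_) fun h s hs => ?_
  · exact mul_nonneg h (hs q hn).le
  · exact mul_nonpos_of_nonpos_of_nonneg h (hs q hn).le

section Chart

open scoped NNReal

variable {E : Type*} [AddCommGroup E] [Module ℝ E] [TopologicalSpace E]

lemma comp_line_mem_expPowerSeries {L : Set (E →L[ℝ] ℝ)} {f : E → ℝ} (hf : f ∈ expSpan L)
    {c : ℝ≥0 → E} {Γ : Set ℝ} (hexp : ∀ l ∈ L, (fun t => Real.exp (l (c t))) ∈ expSeries Γ)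
    (v : E) : (fun z : ℝ≥0 × ℝ => f (c z.1 + z.2 • v)) ∈ expPowerSeries Γ := by
  induction hf using Submodule.span_induction with
  | mem f hf =>
    obtain ⟨l, hl, rfl⟩ := hf
    convert mul_exp_mem_expPowerSeries (hexp l hl) (l v) using 2 with z
    beta_reduce
    rw [map_add, map_smul, smul_eq_mul, Real.exp_add, mul_comm z.2]
  | zero => exact zero_mem _
  | add f g _ _ hf hg => exact add_mem hf hg
  | smul a f _ hf => exact Submodule.smul_mem _ a hf

variable [ContinuousAdd E] [ContinuousSMul ℝ E]

theorem areLinked_of_le_map {c : ℝ≥0 → E} {v : E} (hc : Continuous c)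
    (hexp : ∀ L : Set (E →L[ℝ] ℝ), L.Finite →
      ∃ Γ M, IsExponentPair Γ M ∧ ∀ l ∈ L, (fun t => Real.exp (l (c t))) ∈ expSeries Γ)
    {U V : Ultrafilter E} (hU : U ≤ map (fun z : ℝ≥0 × ℝ => c z.1 + z.2 • v) (atTop ×ˢ 𝓝 0))
    (hV : V ≤ map (fun z : ℝ≥0 × ℝ => c z.1 + z.2 • v) (atTop ×ˢ 𝓝 0)) :
    AreLinked (expSum E) (U : Filter E) V := by
  intro s hs hsI
  obtain ⟨S, hSfin, hS, hsS, hSI⟩ := exists_isDerivClosed hs hsI v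
  obtain ⟨L, hL, hSL⟩ := exists_finite_subset_expSpan (hSfin.image Prod.snd)
    (forall_mem_image.2 fun p hp => (hSI p hp).1)
  obtain ⟨Γ, M, hΓM, hΓ⟩ := hexp L hL
  choose σ hσ hσU hσV using fun p : S =>
    exists_mul_pos_of_notMem_separatingIdeal (hSI p p.2).1 (hSI p p.2).2
  have := hSfin.to_subtype
  let f (p : S) (z : ℝ≥0 × ℝ) : ℝ := σ p * p.1.2 (c z.1 + z.2 • v)
  have hf (p : S) : f p ∈ expPowerSeries Γ := Submodule.smul_mem _ (σ p)
    (comp_line_mem_expPowerSeries (hSL _ (mem_image_of_mem _ p.2)) hΓ v)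
  have hf0 (p : S) : f p ≠ 0 := fun h => by
    obtain ⟨x, hx, hpos⟩ := (Eventually.and (hU (image_mem_map univ_mem)) (hσU p)).exists
    obtain ⟨z, -, rfl⟩ := hx
    exact hpos.ne' (congrFun h z)
  obtain ⟨δ, hδ, A, hD⟩ := exists_isPreconnected_setOf_forall_pos hΓM hf hf0
    fun t => hS.isRolleSystem hσ (c t)
  have hmem : ∀ᶠ z : ℝ≥0 × ℝ in atTop ×ˢ 𝓝 0, A < z.1 ∧ |z.2| < δ :=
    (eventually_gt_atTop A).prod_mk (by simpa using eventually_abs_sub_lt (0 : ℝ) hδ)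
  have hDW {W : Ultrafilter E}
      (hW : W ≤ map (fun z : ℝ≥0 × ℝ => c z.1 + z.2 • v) (atTop ×ˢ 𝓝 0))
      (hWpos : ∀ p : S, ∀ᶠ x in W, 0 < σ p * p.1.2 x) :
      (fun z : ℝ≥0 × ℝ => c z.1 + z.2 • v) '' {z | A < z.1 ∧ |z.2| < δ ∧ ∀ p, 0 < f p z} ∈ W := by
    filter_upwards [hW (image_mem_map hmem), eventually_all.2 hWpos]
    rintro _ ⟨z, ⟨hz, hz'⟩, rfl⟩ hpos
    exact ⟨z, ⟨hz, hz', hpos⟩, rfl⟩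
  refine ⟨_, hD.image _ (by fun_prop), hDW hU hσU, hDW hV hσV, ?_⟩
  rintro _ ⟨z, ⟨-, -, hz⟩, rfl⟩ g hg
  obtain ⟨p, hp, rfl⟩ := hsS hg
  exact right_ne_zero_of_mul (hz ⟨p, hp⟩).ne'

end Chart

section ExponentPair

open scoped Pointwise

lemma isExponentPair_closure_sub {Γ : Set ℝ} (hΓ : Γ.Finite) :
    IsExponentPair Γ (AddSubmonoid.closure {x ∈ Γ - Γ | 0 ≤ x}) where
  isWF := hΓ.isWF
  isWF_submonoid :=
    (IsPWO.addSubmonoid_closure (fun _ hx => hx.2) ((hΓ.sub hΓ).subset (sep_subset _ _)).isPWO).isWF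
  nonneg γ hγ := by
    induction hγ using AddSubmonoid.closure_induction with
    | mem γ hγ => exact hγ.2
    | zero => exact le_rfl
    | add γ γ' _ _ hγ hγ' => exact add_nonneg hγ hγ'
  sub_mem γ hγ γ' hγ' h := AddSubmonoid.subset_closure ⟨sub_mem_sub hγ' hγ, sub_nonneg.2 h⟩

lemma isExponentPair_range_natCast :
    IsExponentPair (range Nat.cast) (AddMonoidHom.mrange (Nat.castAddMonoidHom ℝ)) := by
  have hwf : (range (Nat.cast : ℕ → ℝ)).IsWF := by
    rw [← image_univ]
    exact ((isPWO_of_wellQuasiOrderedLE univ).image_of_monotone Nat.mono_cast).isWF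
  refine ⟨hwf, hwf, ?_, ?_⟩
  · rintro _ ⟨n, rfl⟩
    exact n.cast_nonneg
  · rintro _ ⟨n, rfl⟩ _ ⟨m, rfl⟩ h
    exact ⟨m - n, Nat.cast_sub (Nat.cast_le.1 h)⟩

end ExponentPair

section LinkedCharts

open scoped NNReal

variable {E : Type*} [AddCommGroup E] [Module ℝ E] [TopologicalSpace E]

lemma exists_isExponentPair_ray (x u : E) {L : Set (E →L[ℝ] ℝ)} (hL : L.Finite) :
    ∃ Γ M, IsExponentPair Γ M ∧
      ∀ l ∈ L, (fun t : ℝ≥0 => Real.exp (l (x + (t : ℝ) • u))) ∈ expSeries Γ := by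
  refine ⟨_, _, isExponentPair_closure_sub (hL.image fun l => -l u), fun l hl => ?_⟩
  convert Submodule.smul_mem _ (Real.exp (l x))
    (exp_neg_mul_mem_expSeries (mem_image_of_mem (fun l => -l u) hl)) using 1
  funext t
  rw [map_add, map_smul, smul_eq_mul, Real.exp_add, Pi.smul_apply, smul_eq_mul, neg_neg,
    mul_comm (l u)]

lemma exists_isExponentPair_exp_neg (x u : E) :
    ∃ Γ M, IsExponentPair Γ M ∧ ∀ l : E →L[ℝ] ℝ,
      (fun t : ℝ≥0 => Real.exp (l (x + Real.exp (-t) • u))) ∈ expSeries Γ := by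
  refine ⟨_, _, isExponentPair_range_natCast, fun l => ?_⟩
  refine mem_expSeries_of_hasSum (c := fun n => Real.exp (l x) * (l u ^ n / n.factorial))
    (γ := Nat.cast) mem_range_self fun t => ?_
  have hexp : HasSum (fun n : ℕ => (l u * Real.exp (-t)) ^ n / n.factorial)
      (Real.exp (l u * Real.exp (-t))) := by
    rw [Real.exp_eq_exp_ℝ]
    exact NormedSpace.expSeries_div_hasSum_exp _
  rw [map_add, map_smul, smul_eq_mul, Real.exp_add, mul_comm (Real.exp (-t))]
  refine (hexp.mul_left _).congr_fun fun n => ?_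
  rw [mul_pow, ← Real.exp_nat_mul, mul_neg, neg_mul]
  ring

variable [ContinuousAdd E] [ContinuousSMul ℝ E] {U V : Ultrafilter E} {m l : E →L[ℝ] ℝ} {u v : E}

lemma areLinked_of_tendsto_atTop (huv : ∀ x, m x • u + l x • v = x)
    (hmU : Tendsto m U atTop) (hmV : Tendsto m V atTop) {s : ℝ} (hlU : Tendsto l U (𝓝 s))
    (hlV : Tendsto l V (𝓝 s)) : AreLinked (expSum E) (U : Filter E) V := by
  have hle {W : Ultrafilter E} (hm : Tendsto m W atTop) (hl : Tendsto l W (𝓝 s)) :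
      W ≤ map (fun z : ℝ≥0 × ℝ => (s • v + (z.1 : ℝ) • u) + z.2 • v) (atTop ×ˢ 𝓝 0) := by
    refine le_map_of_right_inverse (mba := fun x => ((m x).toNNReal, l x - s)) ?_
      ((tendsto_real_toNNReal_atTop.comp hm).prodMk (by simpa using hl.sub_const s))
    filter_upwards [hm.eventually_ge_atTop 0] with x hx
    simp only [Function.comp_apply, Real.coe_toNNReal _ hx, id_eq]
    rw [add_right_comm, ← add_smul, add_sub_cancel, add_comm, huv]
  exact areLinked_of_le_map (by fun_prop) (fun L hL => exists_isExponentPair_ray _ u hL)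
    (hle hmU hlU) (hle hmV hlV)

lemma areLinked_of_le_nhds_of_eventually_pos (huv : ∀ x, m x • u + l x • v = x) {x₀ : E}
    (hU : U ≤ 𝓝 x₀) (hV : V ≤ 𝓝 x₀) (hmU : ∀ᶠ x in U, m x₀ < m x) (hmV : ∀ᶠ x in V, m x₀ < m x) :
    AreLinked (expSum E) (U : Filter E) V := by
  have hle {W : Ultrafilter E} (hW : W ≤ 𝓝 x₀) (hm : ∀ᶠ x in W, m x₀ < m x) :
      W ≤ map (fun z : ℝ≥0 × ℝ => (x₀ + Real.exp (-z.1) • u) + z.2 • v) (atTop ×ˢ 𝓝 0) := by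
    have hlim (k : E →L[ℝ] ℝ) : Tendsto (fun x => k x - k x₀) W (𝓝 0) := by
      simpa using ((k.continuous.tendsto x₀).mono_left hW).sub_const (k x₀)
    have hlog : Tendsto (fun x => -Real.log (m x - m x₀)) W atTop :=
      tendsto_neg_atBot_atTop.comp <| Real.tendsto_log_nhdsGT_zero.comp <|
        tendsto_nhdsWithin_iff.2 ⟨hlim m, hm.mono fun x => sub_pos.2⟩
    refine le_map_of_right_inverse
      (mba := fun x => ((-Real.log (m x - m x₀)).toNNReal, l x - l x₀)) ?_
      ((tendsto_real_toNNReal_atTop.comp hlog).prodMk (hlim l))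
    filter_upwards [hlog.eventually_ge_atTop 0, hm] with x hx hmx
    simp only [Function.comp_apply, Real.coe_toNNReal _ hx, neg_neg, Real.exp_log (sub_pos.2 hmx),
      id_eq]
    rw [← map_sub, ← map_sub, add_assoc, huv, add_sub_cancel]
  obtain ⟨Γ, M, hΓM, hΓ⟩ := exists_isExponentPair_exp_neg x₀ u
  exact areLinked_of_le_map (by fun_prop) (fun L _ => ⟨Γ, M, hΓM, fun l _ => hΓ l⟩)
    (hle hU hmU) (hle hV hmV)

end LinkedCharts

section Trichotomy

variable {E : Type*} [AddCommGroup E] [Module ℝ E] [TopologicalSpace E] {U V : Ultrafilter E}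

lemma eventually_lt_of_one_notMem_separatingIdeal (h1 : 1 ∉ separatingIdeal (expSum E) U V)
    (l : E →L[ℝ] ℝ) {a b : ℝ} (hab : a < b) (hU : ∀ᶠ x in U, l x ≤ a) : ∀ᶠ x in V, l x < b := by
  by_contra hV
  have hpos : 0 < Real.exp b - Real.exp a := sub_pos.2 (Real.exp_lt_exp.2 hab)
  refine h1 ⟨(Real.exp b - Real.exp a)⁻¹ • ((fun x => Real.exp (l x)) - Real.exp a • 1),
    (expSum E).smul_mem ((expSum E).sub_mem (exp_mem_expSum l)
      ((expSum E).smul_mem (expSum E).one_mem _)) _, ?_, ?_⟩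
  · filter_upwards [hU] with x hx
    simpa using mul_nonpos_of_nonneg_of_nonpos (inv_nonneg.2 hpos.le)
      (sub_nonpos.2 (Real.exp_le_exp.2 hx))
  · filter_upwards [Ultrafilter.eventually_not.2 hV] with x hx
    simpa using (le_inv_mul_iff₀ hpos).2
      (by simpa using Real.exp_le_exp.2 (not_lt.1 hx))

lemma tendsto_trichotomy_of_one_notMem_separatingIdeal (h1 : 1 ∉ separatingIdeal (expSum E) U V)
    (l : E →L[ℝ] ℝ) :
    (∃ s, Tendsto l U (𝓝 s) ∧ Tendsto l V (𝓝 s)) ∨ (Tendsto l U atTop ∧ Tendsto l V atTop) ∨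
      (Tendsto l U atBot ∧ Tendsto l V atBot) := by
  have hlt {a b : ℝ} (hab : a < b) (hU : ∀ᶠ x in U, l x ≤ a) : ∀ᶠ x in V, l x < b :=
    eventually_lt_of_one_notMem_separatingIdeal h1 l hab hU
  have hgt {a b : ℝ} (hab : b < a) (hU : ∀ᶠ x in U, a ≤ l x) : ∀ᶠ x in V, b < l x := by
    simpa using eventually_lt_of_one_notMem_separatingIdeal h1 (-l) (neg_lt_neg hab) (by simpa)
  by_cases htop : ∀ a, ∀ᶠ x in U, a ≤ l x
  · exact Or.inr (Or.inl ⟨tendsto_atTop.2 htop, tendsto_atTop.2 fun a =>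
      (hgt (lt_add_one a) (htop _)).mono fun _ => le_of_lt⟩)
  by_cases hbot : ∀ a, ∀ᶠ x in U, l x ≤ a
  · exact Or.inr (Or.inr ⟨tendsto_atBot.2 hbot, tendsto_atBot.2 fun a =>
      (hlt (sub_one_lt a) (hbot _)).mono fun _ => le_of_lt⟩)
  push Not at htop hbot
  obtain ⟨b, hb⟩ := htop
  obtain ⟨a, ha⟩ := hbot
  obtain ⟨s, -, hs⟩ := (isCompact_Icc (a := a) (b := b)).ultrafilter_le_nhds (U.map l)
    (le_principal_iff.2 ((ha.and hb).mono fun x hx => ⟨hx.1.le, hx.2.le⟩))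
  have hs : Tendsto l U (𝓝 s) := hs
  refine Or.inl ⟨s, hs, tendsto_order.2 ⟨fun a has => ?_, fun b hsb => ?_⟩⟩
  · obtain ⟨c, hac, hcs⟩ := exists_between has
    exact hgt hac ((hs.eventually_const_lt hcs).mono fun _ => le_of_lt)
  · obtain ⟨c, hsc, hcb⟩ := exists_between hsb
    exact hlt hcb ((hs.eventually_lt_const hsc).mono fun _ => le_of_lt)

end Trichotomy

section DominantExponential

variable {E : Type*} [AddCommGroup E] [Module ℝ E] [TopologicalSpace E]

lemma exists_finsupp_of_mem_expSum {f : E → ℝ} (hf : f ∈ expSum E) :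
    ∃ c : (E →L[ℝ] ℝ) →₀ ℝ, ∀ x, f x = ∑ l ∈ c.support, c l * Real.exp (l x) := by
  change f ∈ expSpan univ at hf
  rw [expSpan, image_univ, Finsupp.mem_span_range_iff_exists_finsupp] at hf
  obtain ⟨c, rfl⟩ := hf
  exact ⟨c, fun x => by simp [Finsupp.sum]⟩

lemma exists_forall_sum_mul_exp_ne_zero [DecidableEq (E →L[ℝ] ℝ)] (c : (E →L[ℝ] ℝ) →₀ ℝ)
    {l : E →L[ℝ] ℝ} (hl : l ∈ c.support) :
    ∃ C, ∀ x, (∀ k ∈ c.support.erase l, C < (l - k) x) →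
      ∑ k ∈ c.support, c k * Real.exp (k x) ≠ 0 := by
  obtain ⟨C, hC⟩ := ((Real.tendsto_exp_neg_atTop_nhds_zero.const_mul
    (∑ k ∈ c.support.erase l, |c k|)).eventually_lt_const
    (by simpa using hl : _ * 0 < |c l|)).exists
  refine ⟨C, fun x hx h0 => ?_⟩
  rw [← Finset.add_sum_erase _ _ hl, add_eq_zero_iff_eq_neg] at h0
  refine (mul_lt_mul_of_pos_right hC (Real.exp_pos (l x))).not_ge ?_
  calc |c l| * Real.exp (l x) = |∑ k ∈ c.support.erase l, c k * Real.exp (k x)| := by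
        rw [← abs_neg (∑ k ∈ _, _), ← h0, abs_mul, Real.abs_exp]
    _ ≤ ∑ k ∈ c.support.erase l, |c k * Real.exp (k x)| := Finset.abs_sum_le_sum_abs _ _
    _ ≤ ∑ k ∈ c.support.erase l, |c k| * (Real.exp (-C) * Real.exp (l x)) := by
        refine Finset.sum_le_sum fun k hk => ?_
        rw [abs_mul, Real.abs_exp, ← Real.exp_add]
        refine mul_le_mul_of_nonneg_left (Real.exp_le_exp.2 ?_) (abs_nonneg _)
        have := hx k hk
        rw [sub_apply] at this
        linarith
    _ = (∑ k ∈ c.support.erase l, |c k|) * Real.exp (-C) * Real.exp (l x) := by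
        rw [← Finset.sum_mul, mul_assoc]

variable {U V : Ultrafilter E}

lemma exists_convex_ne_zero_of_forall_tendsto (hUV : ∀ l : E →L[ℝ] ℝ, l ≠ 0 →
      (Tendsto l U atTop ∧ Tendsto l V atTop) ∨ (Tendsto l U atBot ∧ Tendsto l V atBot))
    {f : E → ℝ} (hf : f ∈ expSum E) (hf0 : f ≠ 0) :
    ∃ D, Convex ℝ D ∧ D ∈ U ∧ D ∈ V ∧ ∀ x ∈ D, f x ≠ 0 := by
  classical
  obtain ⟨c, hc⟩ := exists_finsupp_of_mem_expSum hf
  have hne : c.support.Nonempty := by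
    rw [Finsupp.support_nonempty_iff]
    rintro rfl
    exact hf0 (funext fun x => by simp [hc])
  have hmax (x : E) : ∃ l : c.support, ∀ k ∈ c.support, k x ≤ l.1 x := by
    obtain ⟨l, hl, hmax⟩ := c.support.exists_max_image (fun k => k x) hne
    exact ⟨⟨l, hl⟩, hmax⟩
  obtain ⟨⟨l, hl⟩, hmax⟩ := exists_eventually_of_forall_exists U hmax
  obtain ⟨C, hC⟩ := exists_forall_sum_mul_exp_ne_zero c hl
  have htop (k : E →L[ℝ] ℝ) (hk : k ∈ c.support.erase l) :
      Tendsto (l - k) U atTop ∧ Tendsto (l - k) V atTop := by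
    refine (hUV (l - k) (sub_ne_zero.2 (Finset.ne_of_mem_erase hk).symm)).resolve_right fun h => ?_
    obtain ⟨x, hx, hxmax⟩ := ((h.1.eventually_lt_atBot 0).and hmax).exists
    exact (sub_neg.1 hx).not_ge (hxmax k (Finset.mem_of_mem_erase hk))
  refine ⟨⋂ k ∈ c.support.erase l, {x | C < (l - k) x}, ?_, ?_, ?_, fun x hx => ?_⟩
  · exact convex_iInter₂ fun k _ => convex_halfSpace_gt (l - k).isLinear C
  · exact (biInter_finset_mem _).2 fun k hk => (htop k hk).1.eventually_gt_atTop C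
  · exact (biInter_finset_mem _).2 fun k hk => (htop k hk).2.eventually_gt_atTop C
  · rw [hc]
    exact hC x (mem_iInter₂.1 hx)

lemma areLinked_of_forall_tendsto [ContinuousAdd E] [ContinuousSMul ℝ E]
    (hUV : ∀ l : E →L[ℝ] ℝ, l ≠ 0 →
      (Tendsto l U atTop ∧ Tendsto l V atTop) ∨ (Tendsto l U atBot ∧ Tendsto l V atBot)) :
    AreLinked (expSum E) (U : Filter E) V := by
  intro s hs hsI
  choose! D hD hDU hDV hDs using fun f hf => exists_convex_ne_zero_of_forall_tendsto hUV
    (hsI f hf).1 fun h0 => (hsI f hf).2 (h0 ▸ zero_mem _)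
  exact ⟨⋂ f ∈ s, D f, (convex_iInter₂ hD).isPreconnected, (biInter_mem hs).2 hDU,
    (biInter_mem hs).2 hDV, fun x hx f hf => hDs f hf x (mem_iInter₂.1 hx f hf)⟩

end DominantExponential

section Germ

variable {E : Type*} [AddCommGroup E] [Module ℝ E] [TopologicalSpace E] {U V : Ultrafilter E}

lemma sub_const_mem_of_forall_exp_sub_const_mem {I : Submodule ℝ (E → ℝ)} {x₀ : E}
    (hI : ∀ l : E →L[ℝ] ℝ, (fun x => Real.exp (l x) - Real.exp (l x₀)) ∈ I) {f : E → ℝ}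
    (hf : f ∈ expSum E) : (fun x => f x - f x₀) ∈ I := by
  change f ∈ expSpan univ at hf
  induction hf using Submodule.span_induction with
  | mem f hf =>
    obtain ⟨l, -, rfl⟩ := hf
    exact hI l
  | zero => simp [← Pi.zero_def]
  | add f g _ _ hf hg =>
    convert I.add_mem hf hg using 1
    funext x
    simp only [Pi.add_apply]
    ring
  | smul a f _ hf =>
    convert I.smul_mem a hf using 1
    funext x
    simp only [Pi.smul_apply, smul_eq_mul]
    ring

lemma areLinked_of_le_nhds_of_forall_exp_sub_const_mem [LocallyConnectedSpace E] {x₀ : E}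
    (hU : U ≤ 𝓝 x₀) (hV : V ≤ 𝓝 x₀) (hI : ∀ l : E →L[ℝ] ℝ,
      (fun x => Real.exp (l x) - Real.exp (l x₀)) ∈ separatingIdeal (expSum E) U V) :
    AreLinked (expSum E) (U : Filter E) V := by
  intro s hs hsI
  have hne : ∀ f ∈ s, ∀ᶠ x in 𝓝 x₀, f x ≠ 0 := fun f hf => by
    refine (continuous_of_mem_expSum (hsI f hf).1).continuousAt.eventually_ne fun h0 => ?_
    refine (hsI f hf).2 ?_
    simpa [h0] using sub_const_mem_of_forall_exp_sub_const_mem hI (hsI f hf).1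
  obtain ⟨D, hD, hDconn, hDs⟩ := locallyConnectedSpace_iff_connected_subsets.1 ‹_› x₀ _
    ((eventually_all_finite hs).2 hne)
  exact ⟨D, hDconn, hU hD, hV hD, fun x hx f hf => hDs hx f hf⟩

end Germ

section Plane

variable {E : Type*} [NormedAddCommGroup E] [NormedSpace ℝ E]

lemma exists_complementary_functional (hE : Module.finrank ℝ E = 2) {m : E →L[ℝ] ℝ} (hm : m ≠ 0) :
    ∃ (l : E →L[ℝ] ℝ) (u v : E), ∀ x, m x • u + l x • v = x := by
  have := Module.finite_of_finrank_eq_succ hE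
  obtain ⟨w, hw⟩ := DFunLike.ne_iff.1 hm
  let u := (m w)⁻¹ • w
  have hmu : m u = 1 := by simpa [u] using inv_mul_cancel₀ hw
  have hker : Module.finrank ℝ (LinearMap.ker m.toLinearMap) = 1 := by
    have := Module.Dual.finrank_ker_add_one_of_ne_zero (f := m.toLinearMap)
      (ContinuousLinearMap.coe_injective.ne hm)
    omega
  obtain ⟨⟨v, hmv⟩, hv0, hspan⟩ := finrank_eq_one_iff'.1 hker
  obtain ⟨l, hlv⟩ := SeparatingDual.exists_eq_one (R := ℝ) (x := v) (by simpa using hv0)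
  refine ⟨l - l u • m, u, v, fun x => ?_⟩
  obtain ⟨c, hc⟩ := hspan ⟨x - m x • u, by simp [hmu]⟩
  have hcv : c • v = x - m x • u := congrArg Subtype.val hc
  have hlc : (l - l u • m) x = c := by
    have := congrArg l hcv
    simp only [map_smul, map_sub, smul_eq_mul, hlv, mul_one] at this
    rw [this, sub_apply, smul_apply, smul_eq_mul, mul_comm]
  rw [hlc, hcv, add_sub_cancel]

variable {U V : Ultrafilter E}

lemma le_nhds_of_forall_tendsto {m l : E →L[ℝ] ℝ} {u v : E} (huv : ∀ x, m x • u + l x • v = x)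
    {W : Filter E} {a b : ℝ} (hm : Tendsto m W (𝓝 a)) (hl : Tendsto l W (𝓝 b)) :
    W ≤ 𝓝 (a • u + b • v) := by
  simpa [huv, Tendsto] using (hm.smul_const u).add (hl.smul_const v)

/-- Near a point, either every exponential is constant modulo the separating ideal, or some
functional has a strict sign there along both ultrafilters. -/
lemma areLinked_of_le_nhds (hE : Module.finrank ℝ E = 2) {x₀ : E} (hU : U ≤ 𝓝 x₀) (hV : V ≤ 𝓝 x₀) :
    AreLinked (expSum E) (U : Filter E) V := by
  by_cases hI : ∀ l : E →L[ℝ] ℝ,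
      (fun x => Real.exp (l x) - Real.exp (l x₀)) ∈ separatingIdeal (expSum E) U V
  · exact areLinked_of_le_nhds_of_forall_exp_sub_const_mem hU hV hI
  push Not at hI
  obtain ⟨l, hl⟩ := hI
  obtain ⟨σ, hσ, hσU, hσV⟩ := exists_mul_pos_of_notMem_separatingIdeal (𝒜 := expSum E)
    ((expSum E).sub_mem (exp_mem_expSum l) ((expSum E).algebraMap_mem _)) hl
  have hpos (x : E) (hx : 0 < σ * (Real.exp (l x) - Real.exp (l x₀))) : (σ • l) x₀ < (σ • l) x := by
    simp only [smul_apply, smul_eq_mul]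
    rcases hσ.lt_or_gt with h | h
    · exact mul_lt_mul_of_neg_left (Real.exp_lt_exp.1 (sub_neg.1 (neg_of_mul_pos_right hx h.le))) h
    · exact mul_lt_mul_of_pos_left (Real.exp_lt_exp.1 (sub_pos.1 (pos_of_mul_pos_right hx h.le))) h
  have hm : σ • l ≠ 0 := by
    obtain ⟨x, hx⟩ := hσU.exists
    intro h0
    simpa [h0] using hpos x hx
  obtain ⟨k, u, v, huv⟩ := exists_complementary_functional hE hm
  exact areLinked_of_le_nhds_of_eventually_pos huv hU hV (hσU.mono hpos) (hσV.mono hpos)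

theorem areLinked_expSum (hE : Module.finrank ℝ E = 2) (U V : Ultrafilter E) :
    AreLinked (expSum E) (U : Filter E) V := by
  by_cases h1 : 1 ∈ separatingIdeal (expSum E) U V
  · exact fun s _ hsI => ⟨univ, isPreconnected_univ, univ_mem, univ_mem, fun x _ f hf =>
      absurd (mem_separatingIdeal_of_one_mem h1 (hsI f hf).1) (hsI f hf).2⟩
  have htri := tendsto_trichotomy_of_one_notMem_separatingIdeal h1
  by_cases hconv : ∃ l : E →L[ℝ] ℝ, l ≠ 0 ∧ ∃ s, Tendsto l U (𝓝 s) ∧ Tendsto l V (𝓝 s)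
  swap
  · push Not at hconv
    exact areLinked_of_forall_tendsto fun l hl =>
      (htri l).resolve_left fun ⟨s, hU, hV⟩ => hconv l hl s hU hV
  obtain ⟨l, hl, s, hlU, hlV⟩ := hconv
  obtain ⟨m, v, u, hlm⟩ := exists_complementary_functional hE hl
  have huv (x : E) : m x • u + l x • v = x := by rw [add_comm, hlm]
  rcases htri m with ⟨a, hmU, hmV⟩ | ⟨hmU, hmV⟩ | ⟨hmU, hmV⟩
  · exact areLinked_of_le_nhds hE (le_nhds_of_forall_tendsto huv hmU hlU)
      (le_nhds_of_forall_tendsto huv hmV hlV)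
  · exact areLinked_of_tendsto_atTop huv hmU hmV hlU hlV
  · exact areLinked_of_tendsto_atTop (m := -m) (u := -u) (v := v) (fun x => by simp [huv])
      (tendsto_neg_atBot_atTop.comp hmU) (tendsto_neg_atBot_atTop.comp hmV) hlU hlV

end Plane

/-! ### Exponential coordinates on the quadrant -/

section ExpChart

/-- The exponential coordinates `(s, t) ↦ (eˢ, eᵗ)` on the open quadrant, in which generalized
polynomials become exponential sums. -/
def expChart (z : ℝ × ℝ) : PQ :=
  ⟨(Real.exp z.1, Real.exp z.2), Real.exp_pos _, Real.exp_pos _⟩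

/-- The inverse of `expChart`. -/
def logChart (p : PQ) : ℝ × ℝ :=
  (Real.log p.1.1, Real.log p.1.2)

lemma continuous_expChart : Continuous expChart := by
  unfold expChart
  fun_prop

lemma expChart_logChart (p : PQ) : expChart (logChart p) = p :=
  Subtype.ext (Prod.ext (Real.exp_log p.2.1) (Real.exp_log p.2.2))

lemma IsGenPoly.comp_expChart_mem_expSum {a : PQ → ℝ} (ha : IsGenPoly a) :
    a ∘ expChart ∈ expSum (ℝ × ℝ) := by
  obtain ⟨m, c, α, -, -, ha⟩ := ha
  let l (i : Fin m) : ℝ × ℝ →L[ℝ] ℝ :=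
    (α i).1 • ContinuousLinearMap.fst ℝ ℝ ℝ + (α i).2 • ContinuousLinearMap.snd ℝ ℝ ℝ
  have hsum : a ∘ expChart = ∑ i, c i • fun z => Real.exp (l i z) := by
    funext z
    simp [ha, expChart, l, Finset.sum_apply, ← Real.exp_mul, mul_assoc, ← Real.exp_add, mul_comm]
  rw [hsum]
  exact sum_mem fun i _ => (expSum _).smul_mem (exp_mem_expSum (l i)) _

/-- The exponent pair of the monomial that `exp ∘ l` becomes in the coordinates of the quadrant. -/
def exponentPair (l : ℝ × ℝ →L[ℝ] ℝ) : ℝ × ℝ :=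
  (l (1, 0), l (0, 1))

lemma apply_eq_exponentPair (l : ℝ × ℝ →L[ℝ] ℝ) (z : ℝ × ℝ) :
    l z = z.1 * (exponentPair l).1 + z.2 * (exponentPair l).2 := by
  conv_lhs => rw [show z = z.1 • (1, 0) + z.2 • (0, 1) by simp]
  simp only [map_add, map_smul, smul_eq_mul, exponentPair]

lemma exponentPair_injective : Function.Injective exponentPair := fun l l' h =>
  ContinuousLinearMap.ext fun z => by rw [apply_eq_exponentPair, h, ← apply_eq_exponentPair]

lemma exp_apply_logChart (l : ℝ × ℝ →L[ℝ] ℝ) (p : PQ) :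
    Real.exp (l (logChart p)) = p.1.1 ^ (exponentPair l).1 * p.1.2 ^ (exponentPair l).2 := by
  rw [Real.rpow_def_of_pos p.2.1, Real.rpow_def_of_pos p.2.2, ← Real.exp_add,
    apply_eq_exponentPair, logChart]

lemma isGenPoly_comp_logChart {f : ℝ × ℝ → ℝ} (hf : f ∈ expSum (ℝ × ℝ)) :
    IsGenPoly (f ∘ logChart) := by
  obtain ⟨c, hc⟩ := exists_finsupp_of_mem_expSum hf
  let e := c.support.equivFin.symm
  refine ⟨c.support.card, fun i => c (e i), fun i => exponentPair (e i),
    fun i => Finsupp.mem_support_iff.1 (e i).2,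
    exponentPair_injective.comp (Subtype.val_injective.comp e.injective), fun p => ?_⟩
  simp only [Function.comp_apply, hc, exp_apply_logChart, mul_assoc]
  rw [e.sum_comp fun l : c.support => c l * (p.1.1 ^ (exponentPair l).1 *
    p.1.2 ^ (exponentPair l).2)]
  exact (Finset.sum_coe_sort c.support _).symm

end ExpChart

theorem pierce_birkhoff_generalized_two_vars_general {ι : Type*} [Finite ι] {h : PQ → ℝ}
    (hc : Continuous h) {g : ι → PQ → ℝ} (hg : ∀ i, IsGenPoly (g i))
    (hcov : ∀ p, ∃ i, h p = g i p) : IsSupInf h := by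
  obtain ⟨J, K, f, hf, hh⟩ := exists_eq_iSup_iInf_of_forall_areLinked (𝒜 := expSum (ℝ × ℝ))
    (fun _ => continuous_of_mem_expSum) (areLinked_expSum (by simp))
    (hc.comp continuous_expChart) (fun i => (hg i).comp_expChart_mem_expSum)
    (fun z => hcov (expChart z))
  refine ⟨J, K, fun j k => f j k ∘ logChart, fun j k => isGenPoly_comp_logChart (hf j k),
    fun p => ?_⟩
  simpa only [Function.comp_apply, expChart_logChart] using hh (logChart p)

/-- The Pierce–Birkhoff conjecture for generalized polynomials in two variables. -/
theorem pierce_birkhoff_generalized_two_vars (h : PQ → ℝ)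
    (hc : Continuous h) (hpw : IsPiecewiseGenPoly h) :
    IsSupInf h := by
  obtain ⟨_, _, hg, -, -, hcov⟩ := hpw
  exact pierce_birkhoff_generalized_two_vars_general hc hg hcov
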